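/- arXiv:1912.06230 — 2 statements merged into one kernel-verified Lean document; each statement's English description precedes it below -/
import Mathlib

section
/- Let L be a G-graded field with graded subfields l and K, and let k be a graded subfield with k ⊆ l ∩ K. If the extension L/K is finite of degree n (L is free of rank n as a K-module), then every fiber of the restriction map ψ_{L/l,K/k} : P_{L/l} → P_{K/k}, O ↦ O ∩ K, has at most n elements; if L = K then ψ_{L/l,K/k} is injective. -/
universe u v

/-- A `G`-graded commutative ring structure on `A`: graded pieces `deg g`,
multiplicativity of the grading, and an internal direct sum decomposition
recorded by the homogeneous-component function `comp`. -/
structure GradedStr (G : Type u) [CommGroup G] (A : Type v) [CommRing A] where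
  deg : G → AddSubgroup A
  one_mem : (1 : A) ∈ deg 1
  mul_mem : ∀ {g h : G} {a b : A}, a ∈ deg g → b ∈ deg h → a * b ∈ deg (g * h)
  comp : A → G → A
  comp_mem : ∀ a g, comp a g ∈ deg g
  comp_add : ∀ a b g, comp (a + b) g = comp a g + comp b g
  comp_of_mem : ∀ {a : A} {g : G}, a ∈ deg g → comp a g = a
  comp_of_mem_ne : ∀ {a : A} {g g' : G}, a ∈ deg g → g' ≠ g → comp a g' = 0
  finite_support : ∀ a : A, (Function.support (comp a)).Finite
  sum_comp : ∀ a : A, ∑ᶠ g, comp a g = a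

namespace GradedStr

variable {G : Type u} [CommGroup G] {A : Type v} [CommRing A]

/-- `a` is homogeneous: it lies in some graded piece. -/
def IsHomog (𝒜 : GradedStr G A) (a : A) : Prop := ∃ g, a ∈ 𝒜.deg g

/-- A `G`-graded field: a nonzero graded ring in which every nonzero homogeneous
element is invertible. -/
def IsGradedField (𝒜 : GradedStr G A) : Prop :=
  Nontrivial A ∧ ∀ a : A, 𝒜.IsHomog a → a ≠ 0 → IsUnit a

/-- A graded subring: a subring stable under taking homogeneous components. -/
def IsGradedSubring (𝒜 : GradedStr G A) (S : Subring A) : Prop :=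
  ∀ x ∈ S, ∀ g, 𝒜.comp x g ∈ S

/-- A graded subfield of a graded field: a graded subring containing the inverses of
its nonzero homogeneous elements. -/
def IsGradedSubfield (𝒜 : GradedStr G A) (S : Subring A) : Prop :=
  𝒜.IsGradedSubring S ∧ ∀ x ∈ S, 𝒜.IsHomog x → x ≠ 0 → Ring.inverse x ∈ S

/-- The additive subgroup of homogeneous polynomials of grading `h` in `K[g₀⁻¹ T]`,
the polynomial ring in which `T` is declared homogeneous of grading `g₀`: the
coefficient of `T^n` must be homogeneous of grading `h * g₀⁻ⁿ`. -/
def polyDeg (𝒜 : GradedStr G A) (g₀ h : G) : AddSubgroup (Polynomial A) where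
  carrier := {p | ∀ n : ℕ, p.coeff n ∈ 𝒜.deg (h * (g₀ ^ n)⁻¹)}
  zero_mem' := by intro n; simpa using (𝒜.deg (h * (g₀ ^ n)⁻¹)).zero_mem
  add_mem' := by
    intro p q hp hq n
    rw [Polynomial.coeff_add]
    exact (𝒜.deg _).add_mem (hp n) (hq n)
  neg_mem' := by
    intro p hp n
    rw [Polynomial.coeff_neg]
    exact (𝒜.deg _).neg_mem (hp n)

/-- A homogeneous polynomial in `K[g₀⁻¹T]`. -/
def IsHomogPoly (𝒜 : GradedStr G A) (g₀ : G) (p : Polynomial A) : Prop :=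
  ∃ h, p ∈ 𝒜.polyDeg g₀ h

/-- The graded fraction field of a graded subring of a graded field, computed inside
the ambient graded field: the subring generated by `S` together with the inverses of
the nonzero homogeneous elements of `S`. -/
def fracIn (𝒜 : GradedStr G A) (S : Subring A) : Subring A :=
  Subring.closure (↑S ∪ {y : A | ∃ x ∈ S, x ≠ 0 ∧ 𝒜.IsHomog x ∧ y = Ring.inverse x})

end GradedStr

/-- `x` is integral over the subring `S` (satisfies a monic polynomial equation with
coefficients in `S`). -/
def IntegralOver {A : Type v} [CommRing A] (S : Subring A) (x : A) : Prop :=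
  ∃ p : Polynomial A, p.Monic ∧ (∀ n, p.coeff n ∈ S) ∧ Polynomial.eval x p = 0

/-- Algebraic independence of a family of elements over a subring: the evaluation map
from the (multivariate) polynomial ring is injective.  (For homogeneous elements this
is graded algebraic independence, the grading playing no role in injectivity.) -/
def AlgIndepOver {A : Type v} [CommRing A] {ι : Type*} (S : Subring A) (T : ι → A) : Prop :=
  Function.Injective (MvPolynomial.eval₂Hom S.subtype T)

/-- A graded valuation ring of the graded subfield `F` of the ambient graded field:
a graded subring `O ⊆ F` such that every nonzero homogeneous element `f` of `F`
satisfies `f ∈ O` or `f⁻¹ ∈ O`. -/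
def IsGVRofSubfield {G : Type u} [CommGroup G] {A : Type v} [CommRing A]
    (𝒜 : GradedStr G A) (F : Subring A) (O : Subring A) : Prop :=
  O ≤ F ∧ 𝒜.IsGradedSubring O ∧
    ∀ f ∈ F, f ≠ 0 → 𝒜.IsHomog f → f ∈ O ∨ Ring.inverse f ∈ O

/-! For an invertible homogeneous `x`, a homogeneous relation between the powers of `x` over `K` can
be divided by its coefficient of largest size, taking the highest such power `s`. The tail above
`x ^ s`, divided by `x ^ s`, is then an element `p` of degree one which lies in the maximal ideal of
every extension `O` of `O'` that contains `x`, while `1 + p` and `(1 + p) * x` lie in every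
extension. So extensions are pairwise incomparable, and `1 + p` separates an extension containing `x`
from one that does not. Products of such elements give, for finitely many extensions, one element of
degree one for each of them, a unit there and a nonunit in all the others; these are linearly
independent over `K`, since a relation with largest coefficient `1` would make the corresponding
element a nonunit in its own ring. -/

/-- The elements of the subring `O` that are not invertible in `O`, as a subset of the ambient ring.
When `O` is a graded valuation ring, its homogeneous elements are those of the graded maximal
ideal. -/
def nonunitsIn {A : Type v} [CommRing A] (O : Subring A) : Set A :=
  {f | f ∈ O ∧ ∀ y ∈ O, f * y ≠ 1}

section Nonunits

variable {A : Type v} [CommRing A] {O : Subring A}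

theorem zero_mem_nonunitsIn [Nontrivial A] : (0 : A) ∈ nonunitsIn O :=
  ⟨O.zero_mem, fun y _ => by simp⟩

theorem one_notMem_nonunitsIn : (1 : A) ∉ nonunitsIn O :=
  fun h => h.2 1 O.one_mem (mul_one 1)

theorem mul_mem_nonunitsIn {f a : A} (hf : f ∈ nonunitsIn O) (ha : a ∈ O) :
    f * a ∈ nonunitsIn O :=
  ⟨O.mul_mem hf.1 ha, fun y hy h => hf.2 (a * y) (O.mul_mem ha hy) (by rw [← mul_assoc, h])⟩

theorem neg_mem_nonunitsIn {f : A} (hf : f ∈ nonunitsIn O) : -f ∈ nonunitsIn O := by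
  simpa using mul_mem_nonunitsIn hf (O.neg_mem O.one_mem)

theorem exists_mul_eq_one_of_notMem_nonunitsIn {f : A} (hfO : f ∈ O) (hf : f ∉ nonunitsIn O) :
    ∃ y ∈ O, f * y = 1 := by
  by_contra! h
  exact hf ⟨hfO, h⟩

theorem mem_of_mul_mem_of_notMem_nonunitsIn {f x : A} (hfO : f ∈ O) (hf : f ∉ nonunitsIn O)
    (hfx : f * x ∈ O) : x ∈ O := by
  obtain ⟨y, hy, hfy⟩ := exists_mul_eq_one_of_notMem_nonunitsIn hfO hf
  have hx : x = f * x * y := by linear_combination -x * hfy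
  exact hx ▸ O.mul_mem hfx hy

theorem prod_notMem_nonunitsIn {ι : Type*} {s : Finset ι} {f : ι → A} (hfO : ∀ i ∈ s, f i ∈ O)
    (hf : ∀ i ∈ s, f i ∉ nonunitsIn O) : ∏ i ∈ s, f i ∉ nonunitsIn O := by
  have hinv : ∃ y ∈ O, (∏ i ∈ s, f i) * y = 1 := by
    refine Finset.prod_induction f (fun u => ∃ y ∈ O, u * y = 1) ?_ ⟨1, O.one_mem, mul_one 1⟩
      fun i hi => exists_mul_eq_one_of_notMem_nonunitsIn (hfO i hi) (hf i hi)
    rintro u w ⟨y, hy, huy⟩ ⟨z, hz, hwz⟩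
    exact ⟨y * z, O.mul_mem hy hz, by rw [mul_mul_mul_comm, huy, hwz, one_mul]⟩
  obtain ⟨y, hy, h⟩ := hinv
  exact fun hs => hs.2 y hy h

theorem val_mem_nonunitsIn_iff {u : Aˣ} : (u : A) ∈ nonunitsIn O ↔ (u : A) ∈ O ∧ ↑u⁻¹ ∉ O := by
  refine and_congr_right fun _ => ⟨fun h hu => h _ hu u.mul_inv, fun hu y hy h => hu ?_⟩
  rwa [Units.inv_eq_of_mul_eq_one_right h]

theorem span_singleton_le_span_singleton_iff {a b : A} :
    Submodule.span O {a} ≤ Submodule.span O {b} ↔ ∃ o ∈ O, o * b = a := by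
  simp [Submodule.span_singleton_le_iff_mem, Submodule.mem_span_singleton, Subring.smul_def]

end Nonunits

namespace GradedStr

variable {G : Type u} [CommGroup G] {A : Type v} [CommRing A] {𝒜 : GradedStr G A}

theorem addMonoidHom_ext {B : Type*} [AddCommMonoid B] {f f' : A →+ B}
    (h : ∀ g, ∀ a ∈ 𝒜.deg g, f a = f' a) : f = f' := by
  ext a
  rw [← 𝒜.sum_comp a, f.map_finsum (𝒜.finite_support a), f'.map_finsum (𝒜.finite_support a)]
  exact finsum_congr fun g => h g _ (𝒜.comp_mem a g)

variable (𝒜) in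
/-- The homogeneous component `comp · g` as an additive homomorphism. -/
def compHom (g : G) : A →+ A :=
  AddMonoidHom.mk' (fun a => 𝒜.comp a g) fun a b => 𝒜.comp_add a b g

theorem comp_mul_of_mem {x : A} {g : G} (hx : x ∈ 𝒜.deg g) (c : A) (h : G) :
    𝒜.comp (c * x) h = 𝒜.comp c (h * g⁻¹) * x := by
  suffices (𝒜.compHom h).comp (AddMonoidHom.mulRight x) =
      (AddMonoidHom.mulRight x).comp (𝒜.compHom (h * g⁻¹)) from DFunLike.congr_fun this c
  refine 𝒜.addMonoidHom_ext fun i a ha => ?_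
  change 𝒜.comp (a * x) h = 𝒜.comp a (h * g⁻¹) * x
  have hax := 𝒜.mul_mem ha hx
  by_cases hi : h = i * g
  · subst hi
    rw [𝒜.comp_of_mem hax, mul_inv_cancel_right, 𝒜.comp_of_mem ha]
  · rw [𝒜.comp_of_mem_ne hax hi, 𝒜.comp_of_mem_ne ha (mt mul_inv_eq_iff_eq_mul.1 hi), zero_mul]

theorem exists_comp_ne_zero {a : A} (ha : a ≠ 0) : ∃ g, 𝒜.comp a g ≠ 0 := by
  by_contra! h
  exact ha (by rw [← 𝒜.sum_comp a, finsum_congr h, finsum_zero])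

theorem IsGradedSubring.le_of_homog {S T : Subring A} (hS : 𝒜.IsGradedSubring S)
    (h : ∀ x ∈ S, 𝒜.IsHomog x → x ∈ T) : S ≤ T := by
  intro z hz
  rw [← 𝒜.sum_comp z]
  exact finsum_induction (· ∈ T) T.zero_mem (fun _ _ => T.add_mem)
    fun g => h _ (hS z hz g) ⟨g, 𝒜.comp_mem z g⟩

theorem pow_mem_deg {a : A} {g : G} (ha : a ∈ 𝒜.deg g) (m : ℕ) : a ^ m ∈ 𝒜.deg (g ^ m) := by
  induction m with
  | zero => simpa using 𝒜.one_mem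
  | succ m ih => rw [pow_succ, pow_succ]; exact 𝒜.mul_mem ih ha

theorem prod_mem_deg_one {ι : Type*} {s : Finset ι} {f : ι → A} (hf : ∀ i ∈ s, f i ∈ 𝒜.deg 1) :
    ∏ i ∈ s, f i ∈ 𝒜.deg 1 :=
  Finset.prod_induction f (· ∈ 𝒜.deg 1) (fun _ _ ha hb => one_mul (1 : G) ▸ 𝒜.mul_mem ha hb)
    𝒜.one_mem hf

theorem val_inv_mem_deg {u : Aˣ} {g : G} (hu : (u : A) ∈ 𝒜.deg g) : (↑u⁻¹ : A) ∈ 𝒜.deg g⁻¹ := by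
  have hcomp : 𝒜.comp (↑u⁻¹ : A) g⁻¹ * u = 1 := by
    simpa [𝒜.comp_of_mem 𝒜.one_mem] using (𝒜.comp_mul_of_mem hu (↑u⁻¹ : A) 1).symm
  rw [Units.inv_eq_of_mul_eq_one_left hcomp]
  exact 𝒜.comp_mem _ _

theorem IsGradedField.eq_zero_or_exists_unit (hA : 𝒜.IsGradedField) {x : A} (hx : 𝒜.IsHomog x) :
    x = 0 ∨ ∃ u : Aˣ, ↑u = x :=
  or_iff_not_imp_left.2 (hA.2 x hx)

theorem IsGradedSubfield.val_inv_mem [Nontrivial A] {K : Subring A} (hK : 𝒜.IsGradedSubfield K)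
    {u : Aˣ} (hu : 𝒜.IsHomog (u : A)) (huK : (u : A) ∈ K) : (↑u⁻¹ : A) ∈ K :=
  Ring.inverse_unit u ▸ hK.2 u huK hu u.ne_zero

theorem isGradedSubfield_top : 𝒜.IsGradedSubfield (⊤ : Subring A) :=
  ⟨fun _ _ _ => Subring.mem_top _, fun _ _ _ _ => Subring.mem_top _⟩

theorem IsGradedSubfield.mem_nonunitsIn_of_mem_nonunitsIn_inf {K O : Subring A}
    (hK : 𝒜.IsGradedSubfield K) (hA : 𝒜.IsGradedField) {a : A} (ha : 𝒜.IsHomog a)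
    (haO : a ∈ nonunitsIn (O ⊓ K)) : a ∈ nonunitsIn O := by
  have := hA.1
  rcases hA.eq_zero_or_exists_unit ha with rfl | ⟨u, rfl⟩
  · exact zero_mem_nonunitsIn
  · rw [val_mem_nonunitsIn_iff] at haO ⊢
    exact ⟨haO.1.1, fun h => haO.2 ⟨h, hK.val_inv_mem ha haO.1.2⟩⟩

theorem exists_homog_relation {K : Subring A} (hK : 𝒜.IsGradedSubring K) {ι : Type*} {x : ι → A}
    {d : ι → G} (hx : ∀ i, x i ∈ 𝒜.deg (d i)) (hdep : ¬ LinearIndependent K x) :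
    ∃ (t : Finset ι) (b : ι → A) (D : G), (∀ i, b i ∈ K) ∧ (∀ i, b i ∈ 𝒜.deg (D * (d i)⁻¹)) ∧
      (∃ i ∈ t, b i ≠ 0) ∧ ∑ i ∈ t, b i * x i = 0 := by
  obtain ⟨t, c, hc, j, hjt, hj⟩ := not_linearIndependent_iff.1 hdep
  obtain ⟨h, hh⟩ := 𝒜.exists_comp_ne_zero (Subtype.coe_ne_coe.2 hj)
  refine ⟨t, fun i => 𝒜.comp (c i) (h * d j * (d i)⁻¹), h * d j, fun i => hK _ (c i).2 _,
    fun i => 𝒜.comp_mem _ _, ⟨j, hjt, by simpa using hh⟩, ?_⟩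
  calc ∑ i ∈ t, 𝒜.comp (c i) (h * d j * (d i)⁻¹) * x i
      = ∑ i ∈ t, 𝒜.compHom (h * d j) (c i • x i) :=
        Finset.sum_congr rfl fun i _ => (𝒜.comp_mul_of_mem (hx i) (c i) _).symm
    _ = 0 := by rw [← map_sum, hc, map_zero]

end GradedStr

namespace IsGVRofSubfield

variable {G : Type u} [CommGroup G] {A : Type v} [CommRing A] {𝒜 : GradedStr G A}
  {K O : Subring A}

theorem mem_or_val_inv_mem [Nontrivial A] (hO : IsGVRofSubfield 𝒜 K O) {u : Aˣ}
    (hu : 𝒜.IsHomog (u : A)) (huK : (u : A) ∈ K) : (u : A) ∈ O ∨ (↑u⁻¹ : A) ∈ O :=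
  Ring.inverse_unit u ▸ hO.2.2 u huK u.ne_zero hu

theorem inf_of_top (hO : IsGVRofSubfield 𝒜 ⊤ O) (hK : 𝒜.IsGradedSubfield K) :
    IsGVRofSubfield 𝒜 K (O ⊓ K) :=
  ⟨inf_le_right, fun x hx g => ⟨hO.2.1 x hx.1 g, hK.1 x hx.2 g⟩, fun f hfK hf0 hf =>
    (hO.2.2 f (Subring.mem_top f) hf0 hf).imp (⟨·, hfK⟩) (⟨·, hK.2 f hfK hf hf0⟩)⟩

theorem span_singleton_le_total (hO : IsGVRofSubfield 𝒜 K O) (hA : 𝒜.IsGradedField)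
    (hK : 𝒜.IsGradedSubfield K) {a b : A} (ha : 𝒜.IsHomog a) (hb : 𝒜.IsHomog b) (haK : a ∈ K)
    (hbK : b ∈ K) : Submodule.span O {a} ≤ Submodule.span O {b} ∨
      Submodule.span O {b} ≤ Submodule.span O {a} := by
  have := hA.1
  simp only [span_singleton_le_span_singleton_iff]
  rcases hA.eq_zero_or_exists_unit ha with rfl | ⟨u, rfl⟩
  · exact Or.inl ⟨0, O.zero_mem, zero_mul b⟩
  rcases hA.eq_zero_or_exists_unit hb with rfl | ⟨w, rfl⟩
  · exact Or.inr ⟨0, O.zero_mem, zero_mul _⟩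
  have huw : 𝒜.IsHomog (↑(u * w⁻¹) : A) := by
    obtain ⟨g, hg⟩ := ha
    obtain ⟨h, hh⟩ := hb
    exact ⟨g * h⁻¹, by simpa using 𝒜.mul_mem hg (𝒜.val_inv_mem_deg hh)⟩
  have huwK : (↑(u * w⁻¹) : A) ∈ K := by simpa using K.mul_mem haK (hK.val_inv_mem hb hbK)
  exact (hO.mem_or_val_inv_mem huw huwK).imp (⟨_, ·, by simp⟩) (⟨_, ·, by simp⟩)

theorem add_mem_nonunitsIn (hO : IsGVRofSubfield 𝒜 K O) (hA : 𝒜.IsGradedField)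
    (hK : 𝒜.IsGradedSubfield K) {a b : A} (ha : 𝒜.IsHomog a) (hb : 𝒜.IsHomog b)
    (haO : a ∈ nonunitsIn O) (hbO : b ∈ nonunitsIn O) : a + b ∈ nonunitsIn O := by
  rcases hO.span_singleton_le_total hA hK ha hb (hO.1 haO.1) (hO.1 hbO.1) with h | h
  · obtain ⟨o, ho, rfl⟩ := span_singleton_le_span_singleton_iff.1 h
    rw [show o * b + b = b * (o + 1) by ring]
    exact mul_mem_nonunitsIn hbO (O.add_mem ho O.one_mem)
  · obtain ⟨o, ho, rfl⟩ := span_singleton_le_span_singleton_iff.1 h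
    rw [show a + o * a = a * (1 + o) by ring]
    exact mul_mem_nonunitsIn haO (O.add_mem O.one_mem ho)

theorem sum_mem_nonunitsIn (hO : IsGVRofSubfield 𝒜 K O) (hA : 𝒜.IsGradedField)
    (hK : 𝒜.IsGradedSubfield K) {ι : Type*} {s : Finset ι} {f : ι → A} {g : G}
    (hg : ∀ i ∈ s, f i ∈ 𝒜.deg g) (hf : ∀ i ∈ s, f i ∈ nonunitsIn O) :
    ∑ i ∈ s, f i ∈ nonunitsIn O := by
  have := hA.1
  refine (Finset.sum_induction f (fun a => a ∈ 𝒜.deg g ∧ a ∈ nonunitsIn O) ?_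
    ⟨(𝒜.deg g).zero_mem, zero_mem_nonunitsIn⟩ fun i hi => ⟨hg i hi, hf i hi⟩).2
  rintro a b ⟨ha, haO⟩ ⟨hb, hbO⟩
  exact ⟨(𝒜.deg g).add_mem ha hb, hO.add_mem_nonunitsIn hA hK ⟨g, ha⟩ ⟨g, hb⟩ haO hbO⟩

theorem one_add_notMem_nonunitsIn (hO : IsGVRofSubfield 𝒜 K O) (hA : 𝒜.IsGradedField)
    (hK : 𝒜.IsGradedSubfield K) {p : A} (hp : p ∈ 𝒜.deg 1) (hpO : p ∈ nonunitsIn O) :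
    1 + p ∉ nonunitsIn O := by
  intro h
  have hone : 1 + p + -p ∈ nonunitsIn O := hO.add_mem_nonunitsIn hA hK
    ⟨1, (𝒜.deg 1).add_mem 𝒜.one_mem hp⟩ ⟨1, (𝒜.deg 1).neg_mem hp⟩ h (neg_mem_nonunitsIn hpO)
  exact one_notMem_nonunitsIn (add_neg_cancel_right 1 p ▸ hone)

theorem mem_nonunitsIn_of_le (hO : IsGVRofSubfield 𝒜 K O) (hA : 𝒜.IsGradedField)
    {O₂ : Subring A} (hle : O ≤ O₂) {f : A} (hf : 𝒜.IsHomog f) (hfK : f ∈ K)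
    (hfO₂ : f ∈ nonunitsIn O₂) : f ∈ nonunitsIn O := by
  have := hA.1
  rcases hA.eq_zero_or_exists_unit hf with rfl | ⟨u, rfl⟩
  · exact zero_mem_nonunitsIn
  · have hinv : (↑u⁻¹ : A) ∉ O := fun h => (val_mem_nonunitsIn_iff.1 hfO₂).2 (hle h)
    exact val_mem_nonunitsIn_iff.2 ⟨(hO.mem_or_val_inv_mem hf hfK).resolve_right hinv, hinv⟩

end IsGVRofSubfield

theorem exists_le_and_lt_of_lt {ι α : Type*} [LinearOrder ι] [PartialOrder α] {t : Finset ι}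
    (ht : t.Nonempty) {f : ι → α} (htotal : ∀ i ∈ t, ∀ j ∈ t, f i ≤ f j ∨ f j ≤ f i) :
    ∃ s ∈ t, (∀ i ∈ t, f i ≤ f s) ∧ ∀ i ∈ t, s < i → f i < f s := by
  obtain ⟨s, hs, hmax⟩ := t.exists_maximalFor (fun i => toLex (f i, i)) ht
  have hnlt : ∀ i ∈ t, ¬ toLex (f s, s) < toLex (f i, i) := fun i hi h => h.not_ge (hmax hi h.le)
  have hle : ∀ i ∈ t, f i ≤ f s := by
    intro i hi
    by_contra h
    have hlt := lt_of_le_not_ge ((htotal i hi s hs).resolve_left h) h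
    exact hnlt i hi (Prod.Lex.toLex_lt_toLex.2 (Or.inl hlt))
  exact ⟨s, hs, hle, fun i hi hsi => (hle i hi).lt_of_ne fun h =>
    hnlt i hi (Prod.Lex.toLex_lt_toLex.2 (Or.inr ⟨h.symm, hsi⟩))⟩

theorem IsGVRofSubfield.exists_normalized_relation {G : Type u} [CommGroup G] {A : Type v}
    [CommRing A] {𝒜 : GradedStr G A} {K O : Subring A} (hO : IsGVRofSubfield 𝒜 K O)
    (hA : 𝒜.IsGradedField) (hK : 𝒜.IsGradedSubfield K) {ι : Type*} [LinearOrder ι] {x : ι → A}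
    {d : ι → G} (hx : ∀ i, x i ∈ 𝒜.deg (d i)) (hdep : ¬ LinearIndependent K x) :
    ∃ (t : Finset ι) (s : ι) (a : ι → A), s ∈ t ∧ a s = 1 ∧ (∀ i ∈ t, a i ∈ O) ∧
      (∀ i, a i ∈ 𝒜.deg (d s * (d i)⁻¹)) ∧ (∀ i ∈ t, s < i → a i ∈ nonunitsIn O) ∧
      ∑ i ∈ t, a i * x i = 0 := by
  obtain ⟨t, b, D, hbK, hb, ⟨j, hjt, hj⟩, hsum⟩ := 𝒜.exists_homog_relation hK.1 hx hdep
  have hbh : ∀ i, 𝒜.IsHomog (b i) := fun i => ⟨_, hb i⟩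
  obtain ⟨s, hs, hle, hlt⟩ := exists_le_and_lt_of_lt ⟨j, hjt⟩ (f := fun i => Submodule.span O {b i})
    fun i _ k _ => hO.span_singleton_le_total hA hK (hbh i) (hbh k) (hbK i) (hbK k)
  simp only [span_singleton_le_span_singleton_iff] at hle
  have hbs : b s ≠ 0 := by
    intro h
    obtain ⟨o, -, ho⟩ := hle j hjt
    exact hj (by rw [← ho, h, mul_zero])
  obtain ⟨w, hw⟩ := hA.2 (b s) (hbh s) hbs
  have hwdeg := 𝒜.val_inv_mem_deg (u := w) (hw ▸ hb s)
  have haO : ∀ i ∈ t, b i * ↑w⁻¹ ∈ O := by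
    intro i hi
    obtain ⟨o, ho, hoi⟩ := hle i hi
    rwa [← hoi, ← hw, Units.mul_inv_cancel_right]
  refine ⟨t, s, fun i => b i * ↑w⁻¹, hs, by simp [← hw], haO, fun i => ?_, fun i hi hsi =>
    ⟨haO i hi, fun y hy hiy => (hlt i hi hsi).not_ge
      (span_singleton_le_span_singleton_iff.2 ⟨y, hy, ?_⟩)⟩, ?_⟩
  · have hdeg : D * (d i)⁻¹ * (D * (d s)⁻¹)⁻¹ = d s * (d i)⁻¹ := by
      rw [mul_inv, inv_inv, mul_mul_mul_comm, mul_inv_cancel, one_mul, mul_comm]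
    exact hdeg ▸ 𝒜.mul_mem (hb i) hwdeg
  · rw [← hw]
    linear_combination (w : A) * hiy - y * b i * w.mul_inv
  · calc ∑ i ∈ t, b i * ↑w⁻¹ * x i = ↑w⁻¹ * ∑ i ∈ t, b i * x i := by
          rw [Finset.mul_sum]
          exact Finset.sum_congr rfl fun i _ => by ring
      _ = 0 := by rw [hsum, mul_zero]

theorem sum_filter_lt_add_add_sum_filter_gt {ι M : Type*} [LinearOrder ι] [AddCommMonoid M]
    {t : Finset ι} (f : ι → M) {s : ι} (hs : s ∈ t) :
    ∑ i ∈ t with i < s, f i + f s + ∑ i ∈ t with s < i, f i = ∑ i ∈ t, f i := by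
  have hlow : {i ∈ t | i < s} = {i ∈ t.erase s | ¬ s < i} := by
    ext i
    grind
  have hhigh : {i ∈ t | s < i} = {i ∈ t.erase s | s < i} := by
    ext i
    grind
  rw [hlow, hhigh, add_right_comm, add_comm (Finset.sum _ _), Finset.sum_filter_add_sum_filter_not,
    Finset.sum_erase_add _ _ hs]

theorem not_linearIndependent_pow_of_isAlgebraic {R A : Type*} [CommRing R] [Ring A] [Algebra R A]
    {x : A} (hx : IsAlgebraic R x) : ¬ LinearIndependent R fun i : ℕ => x ^ i := by
  obtain ⟨p, hp0, hp⟩ := hx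
  obtain ⟨i, hi⟩ := Polynomial.support_nonempty.2 hp0
  refine not_linearIndependent_iff.2
    ⟨p.support, p.coeff, ?_, i, hi, Polynomial.mem_support_iff.1 hi⟩
  simp [← hp, Polynomial.aeval_def, Polynomial.eval₂_eq_sum, Polynomial.sum_def, Algebra.smul_def]

theorem one_add_sum_mul_eq_neg_sum {A : Type*} [CommRing A] (x : Aˣ) {t : Finset ℕ} {a : ℕ → A}
    {s : ℕ} (hs : s ∈ t) (has : a s = 1) (hsum : ∑ i ∈ t, a i * (x : A) ^ i = 0) :
    (1 + ∑ i ∈ t with s < i, a i * (x : A) ^ (i - s)) * x =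
      -∑ i ∈ t with i < s, a i * (↑x⁻¹ : A) ^ (s - 1 - i) := by
  have hsplit : ∑ i ∈ t with i < s, a i * (x : A) ^ i + (x : A) ^ s +
      ∑ i ∈ t with s < i, a i * (x : A) ^ i = 0 := by
    rw [← hsum, ← sum_filter_lt_add_add_sum_filter_gt _ hs, has, one_mul]
  have hhigh : ∑ i ∈ t with s < i, a i * (x : A) ^ i =
      (x : A) ^ s * ∑ i ∈ t with s < i, a i * (x : A) ^ (i - s) := by
    rw [Finset.mul_sum]
    refine Finset.sum_congr rfl fun i hi => ?_
    rw [mul_left_comm, pow_mul_pow_sub _ (Finset.mem_filter.1 hi).2.le]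
  have hlow : (∑ i ∈ t with i < s, a i * (x : A) ^ i) * x =
      (x : A) ^ s * ∑ i ∈ t with i < s, a i * (↑x⁻¹ : A) ^ (s - 1 - i) := by
    rw [Finset.mul_sum, Finset.sum_mul]
    refine Finset.sum_congr rfl fun i hi => ?_
    obtain ⟨k, rfl⟩ := Nat.exists_eq_add_of_lt (Finset.mem_filter.1 hi).2
    have hpow : (x : A) ^ k * (↑x⁻¹ : A) ^ k = 1 := by rw [← mul_pow, x.mul_inv, one_pow]
    rw [show i + k + 1 - 1 - i = k by omega]
    linear_combination -(a i * (x : A) ^ (i + 1)) * hpow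
  refine (x ^ s).isUnit.mul_left_cancel ?_
  push_cast
  linear_combination (x : A) * hsplit - (x : A) * hhigh - hlow

namespace GradedStr

variable {G : Type u} [CommGroup G] {A : Type v} [CommRing A] {𝒜 : GradedStr G A}

variable (𝒜) in
/-- The fiber over `O'` of the restriction map `O ↦ O ∩ K` on the set of all graded valuation rings
of the ambient graded field. -/
def restrictionFiber (K O' : Subring A) : Set (Subring A) :=
  {O | IsGVRofSubfield 𝒜 ⊤ O ∧ O ⊓ K = O'}

variable {K O' : Subring A}

theorem le_of_mem_restrictionFiber {O : Subring A} (hO : O ∈ 𝒜.restrictionFiber K O') : O' ≤ O :=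
  hO.2 ▸ inf_le_left

theorem isGVRofSubfield_of_mem_restrictionFiber {O : Subring A}
    (hO : O ∈ 𝒜.restrictionFiber K O') (hK : 𝒜.IsGradedSubfield K) : IsGVRofSubfield 𝒜 K O' :=
  hO.2 ▸ hO.1.inf_of_top hK

theorem exists_one_add_mul_mem (hA : 𝒜.IsGradedField) (hK : 𝒜.IsGradedSubfield K)
    (hO' : IsGVRofSubfield 𝒜 K O') {x : A} (hx : 𝒜.IsHomog x) (hx0 : x ≠ 0)
    (halg : IsAlgebraic K x) :
    ∃ p ∈ 𝒜.deg 1, ∀ O ∈ 𝒜.restrictionFiber K O',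
      1 + p ∈ O ∧ (1 + p) * x ∈ O ∧ (x ∈ O → p ∈ nonunitsIn O) := by
  have := hA.1
  obtain ⟨x, rfl⟩ := hA.2 x hx hx0
  obtain ⟨g, hg⟩ := hx
  obtain ⟨t, s, a, hs, has, haO, had, haN, hsum⟩ := hO'.exists_normalized_relation hA hK
    (fun i : ℕ => 𝒜.pow_mem_deg hg i) (not_linearIndependent_pow_of_isAlgebraic halg)
  have hdeg : ∀ i ∈ t.filter (s < ·), a i * (x : A) ^ (i - s) ∈ 𝒜.deg 1 := by
    intro i hi
    have hone : g ^ s * (g ^ i)⁻¹ * g ^ (i - s) = 1 := by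
      rw [mul_right_comm, pow_mul_pow_sub _ (Finset.mem_filter.1 hi).2.le, mul_inv_cancel]
    exact hone ▸ 𝒜.mul_mem (had i) (𝒜.pow_mem_deg hg (i - s))
  refine ⟨∑ i ∈ t with s < i, a i * (x : A) ^ (i - s), (𝒜.deg 1).sum_mem hdeg, fun O hO => ?_⟩
  have hnonunit (hxO : (x : A) ∈ O) :
      ∑ i ∈ t with s < i, a i * (x : A) ^ (i - s) ∈ nonunitsIn O := by
    refine hO.1.sum_mem_nonunitsIn hA isGradedSubfield_top hdeg fun i hi => ?_
    obtain ⟨hit, hsi⟩ := Finset.mem_filter.1 hi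
    have hai : a i ∈ nonunitsIn (O ⊓ K) := hO.2.symm ▸ haN i hit hsi
    exact mul_mem_nonunitsIn (hK.mem_nonunitsIn_of_mem_nonunitsIn_inf hA ⟨_, had i⟩ hai)
      (O.pow_mem hxO _)
  by_cases hxO : (x : A) ∈ O
  · have hmem := O.add_mem O.one_mem (hnonunit hxO).1
    exact ⟨hmem, O.mul_mem hmem hxO, hnonunit⟩
  · have hinv := (hO.1.mem_or_val_inv_mem ⟨g, hg⟩ (Subring.mem_top _)).resolve_left hxO
    have hmul : (1 + ∑ i ∈ t with s < i, a i * (x : A) ^ (i - s)) * x ∈ O := by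
      rw [one_add_sum_mul_eq_neg_sum x hs has hsum]
      exact O.neg_mem (O.sum_mem fun i hi => O.mul_mem
        (le_of_mem_restrictionFiber hO (haO i (Finset.mem_filter.1 hi).1)) (O.pow_mem hinv _))
    exact ⟨by simpa using O.mul_mem hmul hinv, hmul, hnonunit⟩

theorem restrictionFiber_eq_of_le [Algebra.IsAlgebraic K A] (hA : 𝒜.IsGradedField)
    (hK : 𝒜.IsGradedSubfield K) {O₁ O₂ : Subring A} (h₁ : O₁ ∈ 𝒜.restrictionFiber K O')
    (h₂ : O₂ ∈ 𝒜.restrictionFiber K O') (hle : O₁ ≤ O₂) : O₁ = O₂ := by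
  refine hle.antisymm (h₂.1.2.1.le_of_homog fun x hx₂ hx => ?_)
  rcases eq_or_ne x 0 with rfl | hx0
  · exact O₁.zero_mem
  obtain ⟨p, hp, hpO⟩ := exists_one_add_mul_mem hA hK
    (isGVRofSubfield_of_mem_restrictionFiber h₁ hK) hx hx0 (Algebra.IsAlgebraic.isAlgebraic x)
  have hp₁ : p ∈ nonunitsIn O₁ :=
    h₁.1.mem_nonunitsIn_of_le hA hle ⟨1, hp⟩ (Subring.mem_top p) ((hpO O₂ h₂).2.2 hx₂)
  exact mem_of_mul_mem_of_notMem_nonunitsIn (hpO O₁ h₁).1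
    (h₁.1.one_add_notMem_nonunitsIn hA isGradedSubfield_top hp hp₁) (hpO O₁ h₁).2.1

theorem exists_notMem_nonunitsIn_and_mem_nonunitsIn [Algebra.IsAlgebraic K A]
    (hA : 𝒜.IsGradedField) (hK : 𝒜.IsGradedSubfield K) {O₁ O₂ : Subring A}
    (h₁ : O₁ ∈ 𝒜.restrictionFiber K O') (h₂ : O₂ ∈ 𝒜.restrictionFiber K O') (hne : O₁ ≠ O₂) :
    ∃ u ∈ 𝒜.deg 1, (∀ O ∈ 𝒜.restrictionFiber K O', u ∈ O) ∧
      u ∉ nonunitsIn O₁ ∧ u ∈ nonunitsIn O₂ := by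
  obtain ⟨x, hx₁, hx, hx₂⟩ : ∃ x ∈ O₁, 𝒜.IsHomog x ∧ x ∉ O₂ := by
    by_contra! h
    exact hne (restrictionFiber_eq_of_le hA hK h₁ h₂ (h₁.1.2.1.le_of_homog h))
  have hx0 : x ≠ 0 := fun h => hx₂ (h ▸ O₂.zero_mem)
  obtain ⟨p, hp, hpO⟩ := exists_one_add_mul_mem hA hK
    (isGVRofSubfield_of_mem_restrictionFiber h₁ hK) hx hx0 (Algebra.IsAlgebraic.isAlgebraic x)
  refine ⟨1 + p, (𝒜.deg 1).add_mem 𝒜.one_mem hp, fun O hO => (hpO O hO).1,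
    h₁.1.one_add_notMem_nonunitsIn hA isGradedSubfield_top hp ((hpO O₁ h₁).2.2 hx₁), ?_⟩
  by_contra h
  exact hx₂ (mem_of_mul_mem_of_notMem_nonunitsIn (hpO O₂ h₂).1 h (hpO O₂ h₂).2.1)

theorem exists_separating_family [Algebra.IsAlgebraic K A] (hA : 𝒜.IsGradedField)
    (hK : 𝒜.IsGradedSubfield K) {ι : Type*} [Finite ι] {O : ι → Subring A}
    (hinj : Function.Injective O) (hO : ∀ i, O i ∈ 𝒜.restrictionFiber K O') :
    ∃ u : ι → A, (∀ i, u i ∈ 𝒜.deg 1) ∧ (∀ i, u i ∉ nonunitsIn (O i)) ∧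
      ∀ i j, j ≠ i → u i ∈ nonunitsIn (O j) := by
  classical
  have := Fintype.ofFinite ι
  choose! w hw hwO hwi hwj using fun i j (hij : j ≠ i) =>
    exists_notMem_nonunitsIn_and_mem_nonunitsIn hA hK (hO i) (hO j) (hinj.ne hij.symm)
  refine ⟨fun i => ∏ j ∈ Finset.univ.erase i, w i j, fun i => ?_, fun i => ?_, fun i j hij => ?_⟩
  · exact prod_mem_deg_one fun j hj => hw i j (Finset.ne_of_mem_erase hj)
  · exact prod_notMem_nonunitsIn (fun j hj => hwO i j (Finset.ne_of_mem_erase hj) _ (hO i))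
      fun j hj => hwi i j (Finset.ne_of_mem_erase hj)
  · change ∏ m ∈ Finset.univ.erase i, w i m ∈ nonunitsIn (O j)
    rw [← Finset.mul_prod_erase _ _ (Finset.mem_erase.2 ⟨hij, Finset.mem_univ j⟩)]
    refine mul_mem_nonunitsIn (hwj i j hij) (Subring.prod_mem _ fun m hm => ?_)
    exact hwO i m (Finset.ne_of_mem_erase (Finset.mem_of_mem_erase hm)) _ (hO j)

theorem linearIndependent_of_separating (hA : 𝒜.IsGradedField) (hK : 𝒜.IsGradedSubfield K)
    {ι : Type*} {O : ι → Subring A} (hO : ∀ i, O i ∈ 𝒜.restrictionFiber K O') {u : ι → A}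
    (hu : ∀ i, u i ∈ 𝒜.deg 1) (hi : ∀ i, u i ∉ nonunitsIn (O i))
    (hj : ∀ i j, j ≠ i → u i ∈ nonunitsIn (O j)) : LinearIndependent K u := by
  classical
  rcases isEmpty_or_nonempty ι with _ | ⟨⟨i₀⟩⟩
  · exact linearIndependent_empty_type
  let _ : LinearOrder ι := linearOrderOfSTO WellOrderingRel
  by_contra hdep
  obtain ⟨t, s, a, hs, has, haO, had, -, hsum⟩ :=
    (isGVRofSubfield_of_mem_restrictionFiber (hO i₀) hK).exists_normalized_relation hA hK hu hdep
  rw [← Finset.add_sum_erase _ _ hs, has, one_mul] at hsum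
  apply hi s
  rw [eq_neg_of_add_eq_zero_left hsum]
  refine neg_mem_nonunitsIn ((hO s).1.sum_mem_nonunitsIn hA isGradedSubfield_top (g := 1)
    (fun i _ => by simpa using 𝒜.mul_mem (had i) (hu i)) fun i hit => ?_)
  obtain ⟨his, hit⟩ := Finset.mem_erase.1 hit
  rw [mul_comm]
  exact mul_mem_nonunitsIn (hj i s his.symm) (le_of_mem_restrictionFiber (hO s) (haO i hit))

theorem mk_restrictionFiber_le_finrank (hA : 𝒜.IsGradedField) (hK : 𝒜.IsGradedSubfield K)
    [Module.Finite K A] (O' : Subring A) :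
    Cardinal.mk (𝒜.restrictionFiber K O') ≤ Module.finrank K A := by
  have := hA.1
  refine Cardinal.card_le_of fun F => ?_
  have hF : ∀ O : F, O.1.1 ∈ 𝒜.restrictionFiber K O' := fun O => O.1.2
  obtain ⟨u, hu, hui, huj⟩ := exists_separating_family hA hK
    (Subtype.val_injective.comp Subtype.val_injective) hF
  simpa using (linearIndependent_of_separating hA hK hF hu hui huj).fintype_card_le_finrank

end GradedStr

theorem psi_finite_fibers_and_injective_general {G : Type u} [CommGroup G] {L : Type v}
    [CommRing L] (𝒜 : GradedStr G L) (hL : 𝒜.IsGradedField) {K : Subring L}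
    (hK : 𝒜.IsGradedSubfield K) :
    (∀ (n : ℕ) (e : Fin n → L),
      (∀ y : L, ∃ c : Fin n → L, (∀ i, c i ∈ K) ∧ y = ∑ i, c i * e i) →
        ∀ O' : Subring L, Cardinal.mk (𝒜.restrictionFiber K O') ≤ n) ∧
    ((∀ x : L, x ∈ K) → Function.Injective fun O : Subring L => O ⊓ K) := by
  refine ⟨fun n e he O' => ?_, fun hKtop O₁ O₂ h => ?_⟩
  · have := hL.1
    have hspan : Submodule.span K (Set.range e) = ⊤ := by
      refine eq_top_iff.2 fun y _ => ?_
      obtain ⟨c, hc, rfl⟩ := he y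
      exact (Submodule.mem_span_range_iff_exists_fun K).2 ⟨fun i => ⟨c i, hc i⟩, rfl⟩
    have : Module.Finite K L := ⟨hspan ▸ Submodule.fg_span (Set.finite_range e)⟩
    exact (GradedStr.mk_restrictionFiber_le_finrank hL hK O').trans
      (by exact_mod_cast (finrank_le_of_span_eq_top hspan).trans_eq (Fintype.card_fin n))
  · have hK' : K = ⊤ := eq_top_iff.2 fun x _ => hKtop x
    simpa [hK'] using h

/-- Let `L` be a `G`-graded field with graded subfields `l` and `K`,
and `k` a graded subfield with `k ⊆ l ∩ K`.  If `L/K` is finite of degree `n` (`L` is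
free of rank `n` as a `K`-module) then every fiber of the restriction map
`ψ : P_{L/l} → P_{K/k}`, `O ↦ O ∩ K`, has at most `n` elements; if `L = K` then `ψ`
is injective. -/
theorem psi_finite_fibers_and_injective
    {G : Type u} [CommGroup G] {L : Type v} [CommRing L]
    (𝒜 : GradedStr G L) (hL : 𝒜.IsGradedField)
    (l K k : Subring L)
    (hl : 𝒜.IsGradedSubfield l) (hK : 𝒜.IsGradedSubfield K)
    (hk : 𝒜.IsGradedSubfield k) (hkl : k ≤ l) (hkK : k ≤ K) :
    (∀ n : ℕ, ∀ e : Fin n → L,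
      (∀ y : L, ∃! c : Fin n → L, (∀ i, c i ∈ K) ∧ y = ∑ i, c i * e i) →
      ∀ O' : Subring L, IsGVRofSubfield 𝒜 K O' → k ≤ O' →
        Cardinal.mk {O : Subring L //
          (IsGVRofSubfield 𝒜 ⊤ O ∧ l ≤ O) ∧ O ⊓ K = O'} ≤ n) ∧
    ((∀ x : L, x ∈ K) →
      ∀ O₁ O₂ : Subring L, IsGVRofSubfield 𝒜 ⊤ O₁ → l ≤ O₁ →
        IsGVRofSubfield 𝒜 ⊤ O₂ → l ≤ O₂ → O₁ ⊓ K = O₂ ⊓ K → O₁ = O₂) :=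
  ⟨fun n e he O' _ _ => (Cardinal.mk_subtype_mono fun _ hO => ⟨hO.1.1, hO.2⟩).trans
    ((psi_finite_fibers_and_injective_general 𝒜 hL hK).1 n e (fun y => (he y).exists) O'),
  fun hKtop _ _ _ _ _ _ h => (psi_finite_fibers_and_injective_general 𝒜 hL hK).2 hKtop h⟩
end

section
/- Let k be a field, let S and S' be irreducible and reduced schemes of finite type over k, and let π : S' → S be a proper surjective k-morphism. Then the normalization of S' admits a proper k-morphism to an affine k-scheme of finite type if and only if the normalization of S does. In particular (taking S, S' already normal): if π : S' → S is a proper surjective k-morphism between normal integral schemes of finite type over k, then S' is proper over an affine algebraic k-scheme if and only if S is. -/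
open AlgebraicGeometry CategoryTheory

noncomputable section

/-- `ν : T ⟶ S` is the normalization of the integral scheme `S`: `T` is an integral
scheme that is normal (all its local rings are integrally closed domains), `ν` is an
integral morphism (affine and universally closed), and `ν` is birational (it sends
the generic point to the generic point and induces an isomorphism on stalks there). -/
def IsNormalization {T S : Scheme}
    [AlgebraicGeometry.IsIntegral T] [AlgebraicGeometry.IsIntegral S]
    (ν : T ⟶ S) : Prop :=
  (∀ x : T.carrier, IsIntegrallyClosed (T.presheaf.stalk x)) ∧
    IsAffineHom ν ∧ UniversallyClosed ν ∧
    ν.base (genericPoint T) = genericPoint S ∧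
    IsIso (ν.stalkMap (genericPoint T))

/-!
Let `X` and `Y` be the normalizations of `S'` and `S`. Because normalizations of varieties are
finite and `X` is normal, `S' ⟶ S` lifts to a proper dominant morphism `h : X ⟶ Y`, and it remains
to see that `Y` is proper over an affine scheme of finite type if `X` is.

Let `f : X ⟶ Spec C` be proper with `C` of finite type over `k`. Global functions on `X` are
integral over `C`, since `f` is universally closed; they are also integral over `Γ(Y)`, since the
coefficients of the minimal polynomial over the function field of `Y` of a global function on `X`
are regular on the normal scheme `Y`. Hence there is a finitely generated `k`-algebra `B ⊆ Γ(Y)`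
over which `Γ(X)` is integral: take the coefficients of integral equations for the images in `Γ(X)`
of generators of `C`. Then `X ⟶ Spec Γ(X) ⟶ Spec B` is universally closed, and it factors through
the surjection `h`, so `Y ⟶ Spec B` is proper.
-/

universe u

/-! ### Finiteness of integral closures -/

section FinitenessOfIntegralClosure

open Module MvPolynomial Cardinal nonZeroDivisors

theorem exists_finite_forall_smul_mem_span {R M : Type*} [CommRing R] [IsDomain R]
    [AddCommGroup M] [Module R M] (hM : Module.rank R M < ℵ₀) :
    ∃ s : Set M, s.Finite ∧ ∀ x : M, ∃ a ≠ (0 : R), a • x ∈ Submodule.span R s := by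
  obtain ⟨s, hs, hli⟩ := exists_set_linearIndependent_of_isDomain R M
  have h_rank : Module.rank R (M ⧸ Submodule.span R s) = 0 := by
    have h := rank_quotient_add_rank_of_isDomain (Submodule.span R s)
    rw [rank_span_set hli, hs] at h
    exact (add_eq_right_iff.1 h).resolve_left fun h' ↦ hM.not_ge (le_trans (le_max_left _ _) h')
  refine ⟨s, lt_aleph0_iff_set_finite.1 (hs ▸ hM), fun x ↦ ?_⟩
  obtain ⟨a, ha, hax⟩ := rank_eq_zero_iff.1 h_rank (Submodule.Quotient.mk x)
  exact ⟨a, ha, by rwa [← Submodule.Quotient.mk_smul, Submodule.Quotient.mk_eq_zero] at hax⟩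

theorem module_finite_of_injective_of_rank_lt_aleph0 {R M N : Type*} [CommRing R] [IsDomain R]
    [IsNoetherianRing R] [AddCommGroup M] [Module R M] [AddCommGroup N] [Module R N]
    [Module.Free R N] (hM : Module.rank R M < ℵ₀) {f : M →ₗ[R] N} (hf : Function.Injective f) :
    Module.Finite R M := by
  obtain ⟨s, hs, h_span⟩ := exists_finite_forall_smul_mem_span hM
  let g := (Module.Free.chooseBasis R N).repr.toLinearMap ∘ₗ f
  have hg : Function.Injective g := (LinearEquiv.injective _).comp hf
  let t : Set (Module.Free.ChooseBasisIndex R N) := ⋃ x ∈ s, (g x).support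
  have hst : Submodule.span R s ≤ (Finsupp.supported R R t).comap g :=
    Submodule.span_le.2 fun x hx ↦
      (Finsupp.mem_supported R (g x)).2 fun _ hi ↦ Set.mem_biUnion hx hi
  have hgt (x : M) : g x ∈ Finsupp.supported R R t := by
    obtain ⟨a, ha, hax⟩ := h_span x
    intro i hi
    exact hst hax (by simpa [ha] using hi)
  have : Finite t := hs.biUnion fun x _ ↦ Finset.finite_toSet _
  have : IsNoetherian R (Finsupp.supported R R t) :=
    isNoetherian_of_linearEquiv (Finsupp.supportedEquivFinsupp t).symm
  exact .of_injective (g.codRestrict _ hgt) ((LinearMap.injective_codRestrict_iff ..).2 hg)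

theorem free_of_basis_smul {R P N ι κ : Type*} [CommRing R] [CommRing P] [Algebra R P]
    [AddCommGroup N] [Module R N] [Module P N] [IsScalarTower R P N] (b : Basis κ R P) (v : ι → N)
    (c : Basis (ι × κ) R N) (hc : ∀ i j, c (i, j) = b j • v i) : Module.Free P N := by
  let e := (Finsupp.basis fun _ : ι ↦ b).equiv c (Equiv.sigmaEquivProd ι κ)
  have he : (Finsupp.linearCombination P v).restrictScalars R = e :=
    (Finsupp.basis fun _ ↦ b).ext fun i ↦ by
      rw [LinearEquiv.coe_coe, Basis.equiv_apply]
      simp [hc]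
  have h_bij : Function.Bijective ((Finsupp.linearCombination P v).restrictScalars R) :=
    he ▸ e.bijective
  exact .of_equiv (LinearEquiv.ofBijective (Finsupp.linearCombination P v) h_bij)

/-- Euclidean division of exponent vectors by `q`, coordinate by coordinate: a vector corresponds to
its vector of remainders together with its vector of quotients. -/
def finsuppDivModEquiv (σ : Type*) [Finite σ] (q : ℕ) [NeZero q] :
    (σ →₀ ℕ) ≃ (σ → Fin q) × (σ →₀ ℕ) :=
  calc (σ →₀ ℕ) ≃ (σ → ℕ) := Finsupp.equivFunOnFinite
    _ ≃ (σ → Fin q × ℕ) := Equiv.piCongrRight fun _ ↦ (Nat.divModEquiv q).trans (.prodComm _ _)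
    _ ≃ (σ → Fin q) × (σ → ℕ) := Equiv.arrowProdEquivProdArrow _ _ _
    _ ≃ (σ → Fin q) × (σ →₀ ℕ) := .prodCongr (.refl _) Finsupp.equivFunOnFinite.symm

theorem finsuppDivModEquiv_symm_apply {σ : Type*} [Finite σ] (q : ℕ) [NeZero q]
    (a : σ → Fin q) (m : σ →₀ ℕ) : (finsuppDivModEquiv σ q).symm (a, m) =
      q • m + Finsupp.equivFunOnFinite.symm (fun i ↦ (a i : ℕ)) := by
  ext i
  simp [finsuppDivModEquiv, mul_comm]

theorem free_expand {σ R S : Type*} [Finite σ] [CommRing R] [CommRing S] [Algebra R S]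
    [Module.Free R S] (q : ℕ) [NeZero q] :
    letI := ((mapAlgHom (Algebra.ofId R S)).comp (expand (σ := σ) q)).toAlgebra
    Module.Free (MvPolynomial σ R) (MvPolynomial σ S) := by
  let := ((mapAlgHom (Algebra.ofId R S)).comp (expand (σ := σ) q)).toAlgebra
  have : IsScalarTower R (MvPolynomial σ R) (MvPolynomial σ S) := .of_algebraMap_eq' <| by
    ext
    simp [RingHom.algebraMap_toAlgebra, algebraMap_eq]
  let b := Module.Free.chooseBasis R S
  let e := ((Equiv.refl (Module.Free.ChooseBasisIndex R S)).prodCongr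
    (finsuppDivModEquiv σ q)).trans (Equiv.prodAssoc _ _ _).symm
  refine free_of_basis_smul (basisMonomials σ R)
    (fun i ↦ monomial (Finsupp.equivFunOnFinite.symm fun s ↦ i.2 s) (b i.1))
    ((b.smulTower (basisMonomials σ S)).reindex e) ?_
  rintro ⟨i, a⟩ m
  simp [e, finsuppDivModEquiv_symm_apply, Algebra.smul_def, RingHom.algebraMap_toAlgebra,
    monomial_mul, algebraMap_eq, C_mul_monomial]

/-- `P` admits a ring of `q`-th roots that is free over it: `r f` is the `q`-th root of `f ∈ P` in
the free `P`-algebra `Q`. For `q` a power of the characteristic exponent this lets a Frobenius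
semilinear map be turned into a linear one. -/
def HasFreeRoots (P : Type u) [CommRing P] (q : ℕ) : Prop :=
  ∃ (Q : Type u) (_ : CommRing Q) (_ : Algebra P Q) (r : P →+* Q),
    Module.Free P Q ∧ Function.Injective r ∧ ∀ f, r f ^ q = algebraMap P Q f

theorem hasFreeRoots_mvPolynomial {k σ : Type*} [Field k] [Finite σ] (p n : ℕ) [ExpChar k p] :
    HasFreeRoots (MvPolynomial σ k) (p ^ n) := by
  let k' := AlgebraicClosure k
  have : ExpChar k' p := expChar_of_injective_algebraMap (algebraMap k k').injective p
  have : NeZero (p ^ n) := ⟨(expChar_pow_pos k p n).ne'⟩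
  let := ((mapAlgHom (Algebra.ofId k k')).comp (expand (σ := σ) (p ^ n))).toAlgebra
  let root : k →+* k' := (iterateFrobeniusEquiv k' p n).symm.toRingHom.comp (algebraMap k k')
  have h_root : (iterateFrobenius k' p n).comp root = algebraMap k k' := by
    ext
    simp [root, ← coe_iterateFrobeniusEquiv]
  refine ⟨MvPolynomial σ k', inferInstance, this, map root, free_expand _,
    map_injective _ root.injective, fun f ↦ ?_⟩
  calc map root f ^ p ^ n = map (iterateFrobenius k' p n) (expand (p ^ n) (map root f)) :=
        (map_iterateFrobenius_expand ..).symm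
    _ = map (algebraMap k k') (expand (p ^ n) f) := by rw [← map_expand, map_map, h_root]

theorem exists_injective_integralClosure_finsupp (P K L : Type*) [CommRing P] [IsDomain P]
    [IsIntegrallyClosed P] [Field K] [Algebra P K] [IsFractionRing P K] [Field L] [Algebra K L]
    [Algebra P L] [IsScalarTower P K L] [FiniteDimensional K L] [Algebra.IsSeparable K L] :
    ∃ (s : Finset L) (f : integralClosure P L →ₗ[P] s →₀ P), Function.Injective f := by
  classical
  obtain ⟨s, b, hb⟩ := FiniteDimensional.exists_is_basis_integral P K L
  let c := (Algebra.traceForm K L).dualBasis (traceForm_nondegenerate K L) b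
  have hc : LinearIndependent P c := c.linearIndependent.restrict_scalars' P
  have h_le := integralClosure_le_span_dualBasis b hb
  exact ⟨s, (Basis.span hc).repr.toLinearMap ∘ₗ Submodule.inclusion h_le,
    (Basis.span hc).repr.injective.comp (Submodule.inclusion_injective h_le)⟩

theorem exists_frobenius_integralClosure (P E L : Type*) [CommRing P] [Field E] [Field L]
    [Algebra P E] [Algebra E L] [Algebra P L] [IsScalarTower P E L]
    [IsPurelyInseparable.HasExponent E L] (p : ℕ) [ExpChar E p] :
    ∃ F : integralClosure P L →+* integralClosure P E, Function.Injective F ∧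
      ∀ (a : P) (z : integralClosure P L),
        F (a • z) = a ^ p ^ IsPurelyInseparable.exponent E L • F z := by
  let n := IsPurelyInseparable.exponent E L
  let φ := IsPurelyInseparable.iterateFrobenius E L p (n := n) le_rfl
  have hφ (z : L) : algebraMap E L (φ z) = z ^ p ^ n :=
    IsPurelyInseparable.algebraMap_iterateFrobenius E p le_rfl z
  have h_int (z : integralClosure P L) : _root_.IsIntegral P (φ z) := by
    rw [← isIntegral_algebraMap_iff (algebraMap E L).injective, hφ]
    exact z.2.pow _
  refine ⟨(φ.comp (integralClosure P L).val.toRingHom).codRestrict (integralClosure P E) h_int,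
    fun x y hxy ↦ Subtype.ext <| φ.injective congr(Subtype.val $hxy),
    fun a z ↦ Subtype.ext <| (algebraMap E L).injective ?_⟩
  change algebraMap E L (φ (a • (z : L))) = algebraMap E L (a ^ _ • φ z)
  rw [hφ, smul_pow, ← IsScalarTower.coe_toAlgHom' P E L, map_smul, IsScalarTower.coe_toAlgHom', hφ]

-- A power of Frobenius embeds the integral closure semilinearly into that of the separable closure,
-- hence into a free `P`-module; extracting roots of the coordinates makes this embedding linear.
theorem finite_integralClosure_of_hasFreeRoots (P K L : Type*) [CommRing P] [IsDomain P]
    [IsNoetherianRing P] [IsIntegrallyClosed P] [Field K] [Algebra P K] [IsFractionRing P K]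
    [Field L] [Algebra K L] [Algebra P L] [IsScalarTower P K L] [FiniteDimensional K L]
    (p : ℕ) [ExpChar K p] (hP : ∀ n, HasFreeRoots P (p ^ n)) :
    Module.Finite P (integralClosure P L) := by
  let E := separableClosure K L
  have : IsScalarTower P E L := .of_algebraMap_eq fun _ ↦ rfl
  obtain ⟨F, hF, hF_smul⟩ := exists_frobenius_integralClosure P E L p
  obtain ⟨Q, _, _, r, _, hr, hr_pow⟩ := hP (IsPurelyInseparable.exponent E L)
  obtain ⟨s, j, hj⟩ := exists_injective_integralClosure_finsupp P K E
  let f : integralClosure P L →ₗ[P] s →₀ Q :=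
    { toFun z := (j (F z)).mapRange r r.map_zero
      map_add' x y := by ext; simp
      map_smul' a z := by
        ext
        rw [hF_smul, map_smul]
        simp [hr_pow, Algebra.smul_def] }
  have hf : Function.Injective f :=
    (Finsupp.mapRange_injective r r.map_zero hr).comp (hj.comp hF)
  refine module_finite_of_injective_of_rank_lt_aleph0 ?_ hf
  calc Module.rank P (integralClosure P L) ≤ Module.rank P L :=
        Submodule.rank_le (integralClosure P L).toSubmodule
    _ = Module.rank K L := (IsLocalization.rank_eq K P⁰ le_rfl).symm
    _ < ℵ₀ := rank_lt_aleph0 K L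

theorem finiteDimensional_of_finite (P K A L : Type*) [CommRing P] [CommRing A] [IsDomain A]
    [Algebra P A] [FaithfulSMul P A] [Module.Finite P A] [Field K] [Algebra P K]
    [IsFractionRing P K] [Field L] [Algebra A L] [IsFractionRing A L] [Algebra P L] [Algebra K L]
    [IsScalarTower P K L] [IsScalarTower P A L] : FiniteDimensional K L := by
  have : IsDomain P := .of_faithfulSMul P A
  refine rank_lt_aleph0_iff.1 ?_
  rw [← lift_lt_aleph0, Algebra.IsAlgebraic.lift_rank_of_isFractionRing P K A L, lift_lt_aleph0]
  exact rank_lt_aleph0 P A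

theorem finite_integralClosure_of_restrictScalars (P A L : Type*) [CommRing P] [CommRing A]
    [CommRing L] [Algebra P A] [Algebra.IsIntegral P A] [Algebra P L] [Algebra A L]
    [IsScalarTower P A L] [Module.Finite P (integralClosure P L)] :
    Module.Finite A (integralClosure A L) := by
  have : Module.Finite P (integralClosure A L) := by
    let f : integralClosure P L →ₗ[P] integralClosure A L :=
      { toFun z := ⟨z, z.2.tower_top⟩
        map_add' _ _ := rfl
        map_smul' _ _ := rfl }
    exact .of_surjective f fun z ↦ ⟨⟨z, isIntegral_trans (z : L) z.2⟩, rfl⟩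
  exact .of_restrictScalars_finite P A _

theorem finite_integralClosure_of_finiteType (k A K L : Type*) [Field k] [CommRing A] [IsDomain A]
    [Algebra k A] [Algebra.FiniteType k A] [Field K] [Algebra A K] [IsFractionRing A K] [Field L]
    [Algebra K L] [Algebra A L] [IsScalarTower A K L] [FiniteDimensional K L] :
    Module.Finite A (integralClosure A L) := by
  obtain ⟨n, g, hg, hg_fin⟩ := exists_finite_inj_algHom_of_fg k A
  let P := MvPolynomial (Fin n) k
  let F := FractionRing P
  let p := ringExpChar k
  algebraize [g.toRingHom, (algebraMap A K).comp g.toRingHom, (algebraMap A L).comp g.toRingHom]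
  have : FaithfulSMul P A := (faithfulSMul_iff_algebraMap_injective _ _).2 hg
  have : Module.Finite P A := hg_fin
  have : FaithfulSMul P K := .trans P A K
  let := FractionRing.liftAlgebra P K
  algebraize [(algebraMap K L).comp (algebraMap F K)]
  have : IsScalarTower P A K := .of_algebraMap_eq' rfl
  have : IsScalarTower P A L := .of_algebraMap_eq' rfl
  have : IsScalarTower F K L := .of_algebraMap_eq' rfl
  have : IsScalarTower P K L := .to₁₃₄ P A K L
  have : IsScalarTower P F L := .to₁₂₄ P F K L
  have : FiniteDimensional F K := finiteDimensional_of_finite P F A K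
  have : FiniteDimensional F L := Module.Finite.trans K L
  have : ExpChar F p := expChar_of_injective_algebraMap (algebraMap k F).injective p
  have : Module.Finite P (integralClosure P L) :=
    finite_integralClosure_of_hasFreeRoots P F L p fun n ↦ hasFreeRoots_mvPolynomial p n
  exact finite_integralClosure_of_restrictScalars P A L

theorem finite_of_isIntegral_of_faithfulSMul (k A K C L : Type*) [Field k] [CommRing A]
    [IsDomain A] [Algebra k A] [Algebra.FiniteType k A] [Field K] [Algebra A K]
    [IsFractionRing A K] [Field L] [Algebra K L] [Algebra A L] [IsScalarTower A K L]
    [FiniteDimensional K L] [CommRing C] [Algebra A C] [Algebra.IsIntegral A C] [Algebra C L]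
    [FaithfulSMul C L] [IsScalarTower A C L] : Module.Finite A C := by
  have := finite_integralClosure_of_finiteType k A K L
  have : IsNoetherianRing A := Algebra.FiniteType.isNoetherianRing k A
  let f : C →ₐ[A] integralClosure A L := (IsScalarTower.toAlgHom A C L).codRestrict _
    fun c ↦ (Algebra.IsIntegral.isIntegral (R := A) c).algebraMap
  exact .of_injective f.toLinearMap fun x y hxy ↦
    FaithfulSMul.algebraMap_injective C L congr(Subtype.val $hxy)

end FinitenessOfIntegralClosure

/-! ### Descending integrality to a finitely generated subalgebra -/

theorem exists_fg_subalgebra_isIntegral (R : Type*) {G G' : Type*} [CommRing R] [CommRing G]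
    [CommRing G'] [Algebra R G] [Algebra G G'] {x : G'} (hx : _root_.IsIntegral G x) :
    ∃ B : Subalgebra R G, B.FG ∧ _root_.IsIntegral B x := by
  obtain ⟨p, hp, hpx⟩ := hx
  let B := Algebra.adjoin R (p.coeffs : Set G)
  have hpB : (p.coeffs : Set G) ⊆ B.toSubring := Algebra.subset_adjoin
  let q := p.toSubring B.toSubring hpB
  refine ⟨B, ⟨p.coeffs, rfl⟩, q, (p.monic_toSubring _ hpB).2 hp, ?_⟩
  calc q.eval₂ (algebraMap B G') x = (q.map B.toSubring.subtype).eval₂ (algebraMap G G') x :=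
        (Polynomial.eval₂_map ..).symm
    _ = 0 := by rw [p.map_toSubring, hpx]

theorem exists_fg_subalgebra_forall_mem_isIntegral (R : Type*) {G G' : Type*} [CommRing R]
    [CommRing G] [CommRing G'] [Algebra R G] [Algebra G G'] [Algebra.IsIntegral G G']
    (s : Finset G') :
    ∃ B : Subalgebra R G, B.FG ∧ ∀ x ∈ s, _root_.IsIntegral B x := by
  choose B hB hBx using fun x : G' ↦
    exists_fg_subalgebra_isIntegral R (Algebra.IsIntegral.isIntegral (R := G) x)
  refine ⟨s.sup B, s.sup_induction Subalgebra.fg_bot (fun _ h _ ↦ h.sup) fun x _ ↦ hB x,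
    fun x hx ↦ ?_⟩
  algebraize [(Subalgebra.inclusion (Finset.le_sup hx : B x ≤ s.sup B)).toRingHom]
  have : IsScalarTower (B x) (s.sup B : Subalgebra R G) G' := .of_algebraMap_eq' rfl
  exact (hBx x).tower_top

theorem exists_fg_subalgebra_algebraIsIntegral {R G G' C : Type*} [CommRing R] [CommRing G]
    [CommRing G'] [CommRing C] [Algebra R G] [Algebra G G'] [Algebra R G'] [IsScalarTower R G G']
    [Algebra.IsIntegral G G'] [Algebra R C] [Algebra.FiniteType R C] (φ : C →ₐ[R] G')
    (hφ : φ.toRingHom.IsIntegral) : ∃ B : Subalgebra R G, B.FG ∧ Algebra.IsIntegral B G' := by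
  classical
  obtain ⟨s, hs⟩ := Algebra.FiniteType.out (R := R) (A := C)
  obtain ⟨B, hB, hBs⟩ := exists_fg_subalgebra_forall_mem_isIntegral R (G := G) (s.image φ)
  have h_range (c : C) : φ c ∈ (integralClosure B G').restrictScalars R := by
    have h_le : (⊤ : Subalgebra R C).map φ ≤ (integralClosure B G').restrictScalars R := by
      rw [← hs, AlgHom.map_adjoin, Algebra.adjoin_le_iff, ← Finset.coe_image]
      exact hBs
    exact h_le ⟨c, trivial, rfl⟩
  have h_int : (integralClosure B G').val.toRingHom.IsIntegral :=
    .tower_top (φ.toRingHom.codRestrict (integralClosure B G') h_range) _ hφ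
  exact ⟨B, hB, ⟨fun x ↦ isIntegral_trans x (h_int x)⟩⟩

theorem coeff_minpoly_mem_range {A K L : Type*} [CommRing A] [IsDomain A] [IsIntegrallyClosed A]
    [Field K] [Algebra A K] [IsFractionRing A K] [Field L] [Algebra K L] [Algebra A L]
    [IsScalarTower A K L] {s : L} (hs : _root_.IsIntegral A s) (n : ℕ) :
    (minpoly K s).coeff n ∈ Set.range (algebraMap A K) := by
  rw [minpoly.isIntegrallyClosed_eq_field_fractions' K hs, Polynomial.coeff_map]
  exact Set.mem_range_self _

theorem bijective_algebraMap_integralClosure (A K : Type*) [CommRing A] [IsIntegrallyClosed A]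
    [CommRing K] [Algebra A K] [IsFractionRing A K] :
    Function.Bijective (algebraMap A (integralClosure A K)) := by
  let e := IsIntegralClosure.equiv A A K (integralClosure A K)
  exact (funext e.commutes : ⇑e = _) ▸ e.bijective

/-! ### Normal schemes and function fields -/

/-- All stalks of `X` are integrally closed. For an integral scheme this is the usual notion of
normality, the stalks being domains. -/
class IsNormalScheme (X : Scheme.{u}) : Prop where
  isIntegrallyClosed_stalk (x : X) : IsIntegrallyClosed (X.presheaf.stalk x)

section Schemes

open Limits

variable {X Y : Scheme.{u}}

theorem isIntegrallyClosed_section [AlgebraicGeometry.IsIntegral X] [IsNormalScheme X]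
    {U : X.Opens} [Nonempty U] (hU : IsAffineOpen U) : IsIntegrallyClosed Γ(X, U) := by
  refine .of_localization_maximal fun P _ hP ↦ ?_
  let y : PrimeSpectrum Γ(X, U) := ⟨P, hP.isPrime⟩
  have hy : hU.fromSpec y ∈ U := (hU.isoSpec.inv y).2
  let := X.presheaf.algebra_section_stalk ⟨hU.fromSpec y, hy⟩
  have : IsLocalization.AtPrime (X.presheaf.stalk (hU.fromSpec y)) P :=
    hU.isLocalization_stalk' y hy
  have := IsNormalScheme.isIntegrallyClosed_stalk (hU.fromSpec y)
  exact .of_equiv (IsLocalization.algEquiv P.primeCompl (X.presheaf.stalk (hU.fromSpec y))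
    (Localization.AtPrime P)).toRingEquiv

theorem map_genericPoint [IrreducibleSpace X] [IrreducibleSpace Y] (f : X ⟶ Y) [IsDominant f] :
    f (genericPoint X) = genericPoint Y := by
  have h := (genericPoint_spec X).image f.continuous
  rw [Set.image_univ, f.denseRange.closure_range] at h
  exact h.eq (genericPoint_spec Y)

theorem isDominant_of_map_genericPoint [IrreducibleSpace X] [IrreducibleSpace Y] {f : X ⟶ Y}
    (hf : f (genericPoint X) = genericPoint Y) : IsDominant f :=
  ⟨(dense_iff_closure_eq.2 <| hf ▸ genericPoint_spec Y).mono <|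
    Set.singleton_subset_iff.2 <| Set.mem_range_self _⟩

theorem genericPoint_mem [IrreducibleSpace X] (U : X.Opens) [hU : Nonempty U] :
    genericPoint X ∈ U :=
  ((genericPoint_spec X).mem_open_set_iff U.isOpen).2 (by simpa using hU)

instance nonempty_opens_top [IrreducibleSpace X] : Nonempty (⊤ : X.Opens) :=
  ⟨⟨genericPoint X, trivial⟩⟩

instance nonempty_opens_preimage (f : X ⟶ Y) [IsDominant f] (U : Y.Opens) [hU : Nonempty U] :
    Nonempty (f ⁻¹ᵁ U : X.Opens) :=
  let ⟨x, hx⟩ := f.denseRange.exists_mem_open U.isOpen (Set.nonempty_coe_sort.1 hU)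
  ⟨⟨x, hx⟩⟩

/-- The extension of function fields induced by a dominant morphism of irreducible schemes. -/
def functionFieldMap [IrreducibleSpace X] [IrreducibleSpace Y] (f : X ⟶ Y) [IsDominant f] :
    Y.functionField ⟶ X.functionField :=
  Y.presheaf.stalkSpecializes (specializes_of_eq (map_genericPoint f)) ≫
    f.stalkMap (genericPoint X)

theorem germToFunctionField_functionFieldMap [IrreducibleSpace X] [IrreducibleSpace Y] (f : X ⟶ Y)
    [IsDominant f] (U : Y.Opens) [Nonempty U] :
    Y.germToFunctionField U ≫ functionFieldMap f =
      f.app U ≫ X.germToFunctionField (f ⁻¹ᵁ U) := by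
  rw [functionFieldMap, TopCat.Presheaf.germ_stalkSpecializes_assoc, Scheme.Hom.germ_stalkMap]

theorem isIntegral_app_of_universallyClosed (f : X ⟶ Y) [UniversallyClosed f]
    {U : Y.Opens} (hU : IsAffineOpen U) : (f.app U).hom.IsIntegral := by
  have : IsAffine U := hU
  have := isIntegral_appTop_of_universallyClosed (f ∣_ U)
  have hiso : (RingHom.toMorphismProperty RingHom.IsIntegral).RespectsIso :=
    RingHom.toMorphismProperty_respectsIso_iff.1 RingHom.isIntegral_respectsIso
  rw [← Scheme.Hom.resLE_eq_morphismRestrict] at this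
  rw [Scheme.Hom.app_eq_appLE]
  exact (MorphismProperty.arrow_mk_iso_iff (RingHom.toMorphismProperty RingHom.IsIntegral)
    (arrowResLEAppIso ..)).1 this

theorem iSup_nonempty_isAffineOpen :
    ⨆ U : {U : X.Opens // IsAffineOpen U ∧ Nonempty U}, U.1 = ⊤ :=
  eq_top_iff.2 fun x _ ↦
    let ⟨U, hU, hx, _⟩ := exists_isAffineOpen_mem_and_subset (x := x) (U := ⊤) trivial
    TopologicalSpace.Opens.mem_iSup.2 ⟨⟨U, hU, ⟨x, hx⟩⟩, hx⟩

theorem mem_range_germToFunctionField_top [AlgebraicGeometry.IsIntegral X] {s : X.functionField}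
    (hs : ∀ (U : X.Opens) [Nonempty U], IsAffineOpen U → s ∈ Set.range (X.germToFunctionField U)) :
    s ∈ Set.range (X.germToFunctionField ⊤) := by
  let ι := {U : X.Opens // IsAffineOpen U ∧ Nonempty U}
  have (i : ι) : Nonempty i.1 := i.2.2
  choose a ha using fun i : ι ↦ hs i.1 i.2.1
  have h_cover : (⊤ : X.Opens) ≤ ⨆ i : ι, i.1 := iSup_nonempty_isAffineOpen.ge
  have h_compat : X.presheaf.IsCompatible (fun i : ι ↦ i.1) a := fun i j ↦ by
    have h_mem : genericPoint X ∈ i.1 ⊓ j.1 := ⟨genericPoint_mem i.1, genericPoint_mem j.1⟩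
    apply germ_injective_of_isIntegral X (genericPoint X) h_mem
    exact (X.presheaf.germ_res_apply ..).trans <| (ha i).trans <| (ha j).symm.trans
      (X.presheaf.germ_res_apply ..).symm
  obtain ⟨b, hb, -⟩ := X.sheaf.existsUnique_gluing' _ ⊤ (fun i ↦ homOfLE le_top) h_cover a h_compat
  obtain ⟨i, -⟩ := TopologicalSpace.Opens.mem_iSup.1 (h_cover (x := genericPoint X) trivial)
  refine ⟨b, .trans ?_ (ha i)⟩
  rw [← hb i]
  exact (X.presheaf.germ_res_apply ..).symm

theorem isIntegralElem_germToFunctionField [IrreducibleSpace X] [IrreducibleSpace Y] (f : X ⟶ Y)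
    [IsDominant f] [UniversallyClosed f] {U : Y.Opens} [Nonempty U] (hU : IsAffineOpen U)
    (b : Γ(X, ⊤)) : (Y.germToFunctionField U ≫ functionFieldMap f).hom.IsIntegralElem
      (X.germToFunctionField ⊤ b) := by
  have h_germ : X.germToFunctionField (f ⁻¹ᵁ U) (X.presheaf.map (homOfLE le_top).op b) =
      X.germToFunctionField ⊤ b := X.presheaf.germ_res_apply ..
  obtain ⟨p, hp, hpb⟩ :=
    isIntegral_app_of_universallyClosed f hU (X.presheaf.map (homOfLE le_top).op b)
  refine ⟨p, hp, ?_⟩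
  rw [germToFunctionField_functionFieldMap, ← h_germ, CommRingCat.hom_comp]
  exact (Polynomial.hom_eval₂ ..).symm.trans ((congrArg _ hpb).trans (map_zero _))

theorem isIntegral_appTop_of_isNormalScheme [AlgebraicGeometry.IsIntegral X]
    [AlgebraicGeometry.IsIntegral Y] [IsNormalScheme Y] (f : X ⟶ Y) [IsDominant f]
    [UniversallyClosed f] : f.appTop.hom.IsIntegral := by
  intro b
  let s := X.germToFunctionField ⊤ b
  algebraize [(functionFieldMap f).hom]
  have h_coeff (n : ℕ) :
      (minpoly Y.functionField s).coeff n ∈ Set.range (Y.germToFunctionField ⊤) := by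
    refine mem_range_germToFunctionField_top fun U _ hU ↦ ?_
    have := functionField_isFractionRing_of_isAffineOpen Y U hU
    have := isIntegrallyClosed_section hU
    let := (Y.germToFunctionField U ≫ functionFieldMap f).hom.toAlgebra
    have : IsScalarTower Γ(Y, U) Y.functionField X.functionField := .of_algebraMap_eq' rfl
    exact coeff_minpoly_mem_range (isIntegralElem_germToFunctionField f hU b) n
  have hs : _root_.IsIntegral Y.functionField s := by
    obtain ⟨U, hU, hηU, -⟩ :=
      exists_isAffineOpen_mem_and_subset (x := genericPoint Y) (U := ⊤) trivial
    have : Nonempty U := ⟨⟨_, hηU⟩⟩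
    exact (isIntegralElem_germToFunctionField f hU b).of_comp
  obtain ⟨p, hp, -, hp_monic⟩ := Polynomial.lifts_and_natDegree_eq_and_monic
    ((Polynomial.lifts_iff_coeff_lifts _).2 h_coeff) (minpoly.monic hs)
  refine ⟨p, hp_monic, X.germToFunctionField_injective ⊤ ?_⟩
  have h_comp : (X.germToFunctionField ⊤).hom.comp f.appTop.hom =
      (functionFieldMap f).hom.comp (Y.germToFunctionField ⊤).hom :=
    congr(($(germToFunctionField_functionFieldMap f ⊤)).hom).symm
  calc X.germToFunctionField ⊤ (p.eval₂ f.appTop.hom b)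
      = (p.map (Y.germToFunctionField ⊤).hom).eval₂ (functionFieldMap f).hom s := by
        rw [Polynomial.eval₂_map, ← h_comp]
        exact Polynomial.hom_eval₂ ..
    _ = Polynomial.aeval s (minpoly Y.functionField s) := by rw [hp]; rfl
    _ = X.germToFunctionField ⊤ 0 := by rw [minpoly.aeval, map_zero]

theorem fromSpecStalk_genericPoint_preimage [IrreducibleSpace X] (U : X.Opens) [Nonempty U] :
    X.fromSpecStalk (genericPoint X) ⁻¹ᵁ U = ⊤ := by
  refine eq_top_iff.2 fun x _ ↦ ?_
  have hx := Set.mem_range_self (f := X.fromSpecStalk (genericPoint X)) x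
  rw [Scheme.range_fromSpecStalk] at hx
  exact hx.mem_open U.2 (genericPoint_mem U)

theorem isFractionRing_fromSpecStalk_app [AlgebraicGeometry.IsIntegral X] {U : X.Opens}
    [Nonempty U] (hU : IsAffineOpen U) :
    letI := ((X.fromSpecStalk (genericPoint X)).app U).hom.toAlgebra
    IsFractionRing Γ(X, U)
      Γ(Spec X.functionField, X.fromSpecStalk (genericPoint X) ⁻¹ᵁ U) := by
  let f := X.fromSpecStalk (genericPoint X)
  let := (f.app U).hom.toAlgebra
  have := functionField_isFractionRing_of_isAffineOpen X U hU
  let e : X.functionField ≅ Γ(Spec X.functionField, f ⁻¹ᵁ U) :=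
    (Scheme.ΓSpecIso _).symm ≪≫
      (Spec _).presheaf.mapIso (eqToIso (fromSpecStalk_genericPoint_preimage U)).op
  exact IsLocalization.isLocalization_of_algEquiv (nonZeroDivisors Γ(X, U)) <|
    AlgEquiv.ofRingEquiv (f := e.commRingCatIsoToRingEquiv) fun a ↦
      congr($(Scheme.fromSpecStalk_app (genericPoint_mem U)) a).symm

theorem isIso_fromNormalization_fromSpecStalk [AlgebraicGeometry.IsIntegral X] [IsNormalScheme X] :
    IsIso (X.fromSpecStalk (genericPoint X)).fromNormalization := by
  let f := X.fromSpecStalk (genericPoint X)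
  refine (IsZariskiLocalAtTarget.iff_of_iSup_eq_top (P := .isomorphisms _) _
    iSup_nonempty_isAffineOpen).2 ?_
  rintro ⟨U, hU, _⟩
  refine (isIso_morphismRestrict_iff_isIso_app f.fromNormalization hU).2 ?_
  have := isIntegrallyClosed_section hU
  have := isFractionRing_fromSpecStalk_app hU
  let := (f.app U).hom.toAlgebra
  rw [Scheme.Hom.fromNormalization_app f hU]
  have := (ConcreteCategory.isIso_iff_bijective (CommRingCat.ofHom _)).2
    (bijective_algebraMap_integralClosure Γ(X, U) Γ(Spec X.functionField, f ⁻¹ᵁ U))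
  infer_instance

-- Lift `g` first to the generic point and then, through the pullback of `ν` along `g`, to the
-- relative normalization of `X` at its generic point, which is `X` itself.
theorem exists_lift_of_isIntegralHom {S T : Scheme.{u}} [AlgebraicGeometry.IsIntegral X]
    [IsNormalScheme X] (ν : T ⟶ S) [IsIntegralHom ν] (g : X ⟶ S) (u : Spec X.functionField ⟶ T)
    (hu : u ≫ ν = X.fromSpecStalk (genericPoint X) ≫ g) :
    ∃ h : X ⟶ T, h ≫ ν = g ∧ X.fromSpecStalk (genericPoint X) ≫ h = u := by
  let f := X.fromSpecStalk (genericPoint X)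
  have hf : f = pullback.lift u f hu ≫ pullback.snd ν g := (pullback.lift_snd ..).symm
  let d := f.normalizationDesc _ _ hf
  have hd : d ≫ pullback.snd ν g = f.fromNormalization := f.normalizationDesc_comp ..
  have : IsIso f.fromNormalization := isIso_fromNormalization_fromSpecStalk
  have hf' : f ≫ inv f.fromNormalization = f.toNormalization := by simp [IsIso.comp_inv_eq]
  refine ⟨inv f.fromNormalization ≫ d ≫ pullback.fst ν g, ?_, ?_⟩
  · simp [pullback.condition, reassoc_of% hd]
  · simp only [d, f, reassoc_of% hf', Scheme.Hom.toNormalization_normalizationDesc_assoc,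
      pullback.lift_fst]

theorem SpecMap_functionFieldMap_fromSpecStalk [IrreducibleSpace X] [IrreducibleSpace Y]
    (f : X ⟶ Y) [IsDominant f] :
    Spec.map (functionFieldMap f) ≫ Y.fromSpecStalk (genericPoint Y) =
      X.fromSpecStalk (genericPoint X) ≫ f := by
  rw [functionFieldMap, Spec.map_comp, Category.assoc,
    Scheme.SpecMap_stalkSpecializes_fromSpecStalk, Scheme.SpecMap_stalkMap_fromSpecStalk]

instance isDominant_fromSpecStalk_genericPoint [IrreducibleSpace X] :
    IsDominant (X.fromSpecStalk (genericPoint X)) :=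
  ⟨(dense_iff_closure_eq.2 (genericPoint_spec X)).mono <| Set.singleton_subset_iff.2
    ⟨_, Scheme.fromSpecStalk_closedPoint⟩⟩

theorem isDominant_SpecMap_of_isField {R S : CommRingCat.{u}} (hR : IsField R) [Nontrivial S]
    (φ : R ⟶ S) : IsDominant (Spec.map φ) := by
  let := hR.toField
  have : Subsingleton (Spec R) := inferInstanceAs (Subsingleton (PrimeSpectrum R))
  have : Nonempty (Spec S) := inferInstanceAs (Nonempty (PrimeSpectrum S))
  exact ⟨(Function.surjective_to_subsingleton _).denseRange⟩

theorem exists_isDominant_lift_of_isIso_functionFieldMap {S T : Scheme.{u}}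
    [AlgebraicGeometry.IsIntegral S] [AlgebraicGeometry.IsIntegral T]
    [AlgebraicGeometry.IsIntegral X] [IsNormalScheme X] (ν : T ⟶ S) [IsIntegralHom ν]
    [IsDominant ν] [IsIso (functionFieldMap ν)] (g : X ⟶ S) [IsDominant g] :
    ∃ h : X ⟶ T, h ≫ ν = g ∧ IsDominant h := by
  let u : Spec X.functionField ⟶ T :=
    Spec.map (inv (functionFieldMap ν) ≫ functionFieldMap g) ≫ T.fromSpecStalk (genericPoint T)
  have hu : u ≫ ν = X.fromSpecStalk (genericPoint X) ≫ g := by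
    rw [Category.assoc, ← SpecMap_functionFieldMap_fromSpecStalk ν, ← Spec.map_comp_assoc,
      IsIso.hom_inv_id_assoc, SpecMap_functionFieldMap_fromSpecStalk g]
  have := isDominant_SpecMap_of_isField (Field.toIsField T.functionField)
    (inv (functionFieldMap ν) ≫ functionFieldMap g)
  obtain ⟨h, rfl, hh⟩ := exists_lift_of_isIntegralHom ν g u hu
  have : IsDominant (X.fromSpecStalk (genericPoint X) ≫ h) := hh ▸ inferInstance
  exact ⟨h, rfl, .of_comp (X.fromSpecStalk (genericPoint X)) h⟩

theorem finiteType_ΓSpecIso_inv_appLE {R : CommRingCat.{u}} (p : X ⟶ Spec R)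
    [LocallyOfFiniteType p] {U : X.Opens} (hU : IsAffineOpen U) :
    ((Scheme.ΓSpecIso R).inv ≫ p.appLE ⊤ U le_top).hom.FiniteType :=
  (p.finiteType_appLE (isAffineOpen_top _) hU le_top).comp <|
    .of_surjective _ (ConcreteCategory.bijective_of_isIso (Scheme.ΓSpecIso R).inv).2

theorem finite_app_of_finite_functionFieldMap {k : Type u} [Field k]
    [AlgebraicGeometry.IsIntegral X] [AlgebraicGeometry.IsIntegral Y] (p : Y ⟶ Spec (.of k))
    [LocallyOfFiniteType p] (f : X ⟶ Y) [IsIntegralHom f] [IsDominant f]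
    (hf : (functionFieldMap f).hom.Finite) {U : Y.Opens}
    [Nonempty U] (hU : IsAffineOpen U) : (f.app U).hom.Finite := by
  algebraize [((Scheme.ΓSpecIso (.of k)).inv ≫ p.appLE ⊤ U le_top).hom, (f.app U).hom,
    (functionFieldMap f).hom, (Y.germToFunctionField U ≫ functionFieldMap f).hom]
  have : Algebra.FiniteType k Γ(Y, U) := finiteType_ΓSpecIso_inv_appLE p hU
  have : Algebra.IsIntegral Γ(Y, U) Γ(X, f ⁻¹ᵁ U) := ⟨IsIntegralHom.isIntegral_app f U hU⟩
  have := functionField_isFractionRing_of_isAffineOpen Y U hU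
  have : FaithfulSMul Γ(X, f ⁻¹ᵁ U) X.functionField :=
    (faithfulSMul_iff_algebraMap_injective _ _).2 (X.germToFunctionField_injective _)
  have : IsScalarTower Γ(Y, U) Y.functionField X.functionField := .of_algebraMap_eq' rfl
  have : IsScalarTower Γ(Y, U) Γ(X, f ⁻¹ᵁ U) X.functionField :=
    .of_algebraMap_eq' congr(($(germToFunctionField_functionFieldMap f U)).hom)
  exact finite_of_isIntegral_of_faithfulSMul k Γ(Y, U) Y.functionField Γ(X, f ⁻¹ᵁ U)
    X.functionField

theorem isFinite_of_finite_functionFieldMap {k : Type u} [Field k] [AlgebraicGeometry.IsIntegral X]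
    [AlgebraicGeometry.IsIntegral Y] (p : Y ⟶ Spec (.of k)) [LocallyOfFiniteType p] (f : X ⟶ Y)
    [IsIntegralHom f] [IsDominant f] (hf : (functionFieldMap f).hom.Finite) : IsFinite f where
  finite_app U hU := by
    obtain rfl | hU_bot := eq_or_ne U ⊥
    · have : Subsingleton Γ(X, f ⁻¹ᵁ ⊥) := inferInstanceAs (Subsingleton Γ(X, ⊥))
      exact .of_surjective _ (Function.surjective_to_subsingleton _)
    · have : Nonempty U := (TopologicalSpace.Opens.ne_bot_iff_nonempty U).1 hU_bot |>.to_subtype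
      exact finite_app_of_finite_functionFieldMap p f hf hU

/-! ### Semiaffine schemes -/

theorem isSeparated_of_surjective {S : Scheme.{u}} (f : X ⟶ Y) (g : Y ⟶ S) [UniversallyClosed f]
    [AlgebraicGeometry.Surjective f] [IsSeparated (f ≫ g)] : IsSeparated g := by
  let m : pullback (f ≫ g) (f ≫ g) ⟶ pullback g g :=
    pullback.map (f ≫ g) (f ≫ g) g g f f (𝟙 _) (by simp) (by simp)
  have : UniversallyClosed m :=
    MorphismProperty.pullbackMap (P := @UniversallyClosed) inferInstance inferInstance rfl rfl
  have hm : pullback.diagonal (f ≫ g) ≫ m = f ≫ pullback.diagonal g := by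
    apply pullback.hom_ext
    · rw [Category.assoc, pullback.lift_fst, Category.assoc, pullback.diagonal_fst,
        pullback.diagonal_fst_assoc, Category.comp_id]
    · rw [Category.assoc, pullback.lift_snd, Category.assoc, pullback.diagonal_snd,
        pullback.diagonal_snd_assoc, Category.comp_id]
  have h_range : Set.range (pullback.diagonal g) =
      Set.range (pullback.diagonal (f ≫ g) ≫ m) := by
    rw [hm, Scheme.Hom.comp_base, TopCat.coe_comp, f.surjective.range_comp]
  refine ⟨IsClosedImmersion.of_isPreimmersion _ ?_⟩
  rw [h_range]
  exact (pullback.diagonal (f ≫ g) ≫ m).isClosedMap.isClosed_range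

theorem isProper_of_surjective {S : Scheme.{u}} (f : X ⟶ Y) (g : Y ⟶ S) [UniversallyClosed f]
    [AlgebraicGeometry.Surjective f] [LocallyOfFiniteType g] [IsProper (f ≫ g)] : IsProper g :=
  have : UniversallyClosed g := .of_comp_surjective f g
  have : IsSeparated g := isSeparated_of_surjective f g
  { }

theorem universallyClosed_toSpecΓ (f : X ⟶ Y) [IsAffine Y] [UniversallyClosed f] :
    UniversallyClosed X.toSpecΓ := by
  have : UniversallyClosed (X.toSpecΓ ≫ Spec.map f.appTop) := by
    rw [← Scheme.toSpecΓ_naturality]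
    infer_instance
  exact .of_comp_of_isSeparated _ (Spec.map f.appTop)

theorem isSeparated_toSpecΓ (f : X ⟶ Y) [IsAffine Y] [IsSeparated f] :
    IsSeparated X.toSpecΓ := by
  have : IsSeparated (X.toSpecΓ ≫ Spec.map f.appTop) := by
    rw [← Scheme.toSpecΓ_naturality]
    infer_instance
  exact .of_comp _ (Spec.map f.appTop)

theorem toSpecΓ_SpecMap_comp {R B : CommRingCat.{u}} (p : X ⟶ Spec R) (i : B ⟶ Γ(X, ⊤))
    (j : R ⟶ B) (hij : j ≫ i = (Scheme.ΓSpecIso R).inv ≫ p.appTop) :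
    (X.toSpecΓ ≫ Spec.map i) ≫ Spec.map j = p := by
  rw [Category.assoc, ← Spec.map_comp, hij, Spec.map_comp, ← Scheme.toSpecΓ_naturality_assoc]
  simp

theorem exists_finiteType_isIntegral_comp_appTop {A : Scheme.{u}} {R : CommRingCat.{u}}
    [IsAffine A] (q : A ⟶ Spec R) [LocallyOfFiniteType q] (f : X ⟶ A) (h : X ⟶ Y)
    (p : Y ⟶ Spec R) (hf : f ≫ q = h ≫ p) (hf_int : f.appTop.hom.IsIntegral)
    (hh_int : h.appTop.hom.IsIntegral) :
    ∃ (B : CommRingCat.{u}) (j : R ⟶ B) (i : B ⟶ Γ(Y, ⊤)), j.hom.FiniteType ∧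
      j ≫ i = (Scheme.ΓSpecIso R).inv ≫ p.appTop ∧ (i ≫ h.appTop).hom.IsIntegral := by
  let ι := (Scheme.ΓSpecIso R).inv
  have h_comm : (ι ≫ q.appTop) ≫ f.appTop = (ι ≫ p.appTop) ≫ h.appTop := by
    rw [Category.assoc, Category.assoc, ← Scheme.Hom.comp_appTop, ← Scheme.Hom.comp_appTop, hf]
  have hq : (ι ≫ q.appTop).hom.FiniteType := by
    have h_app : q.appLE ⊤ ⊤ le_top = q.appTop := q.appLE_eq_app
    exact h_app ▸ finiteType_ΓSpecIso_inv_appLE q (isAffineOpen_top A)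
  algebraize [(ι ≫ p.appTop).hom, (ι ≫ q.appTop).hom, h.appTop.hom,
    ((ι ≫ p.appTop) ≫ h.appTop).hom]
  have : IsScalarTower R Γ(Y, ⊤) Γ(X, ⊤) := .of_algebraMap_eq' rfl
  let φ : Γ(A, ⊤) →ₐ[R] Γ(X, ⊤) := ⟨f.appTop.hom, fun r ↦ congr($h_comm r)⟩
  obtain ⟨B, hB, hB_int⟩ := exists_fg_subalgebra_algebraIsIntegral (G := Γ(Y, ⊤)) φ hf_int
  exact ⟨.of B, CommRingCat.ofHom (algebraMap R B), CommRingCat.ofHom B.val.toRingHom,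
    (Subalgebra.fg_iff_finiteType B).1 hB, rfl, hB_int.isIntegral⟩

/-- A scheme over `Y` is semiaffine if it admits a proper `Y`-morphism to an affine scheme of finite
type over `Y`. -/
def IsSemiaffine (p : X ⟶ Y) : Prop :=
  ∃ (A : Scheme.{u}) (q : A ⟶ Y) (f : X ⟶ A),
    IsAffine A ∧ LocallyOfFiniteType q ∧ QuasiCompact q ∧ IsProper f ∧ f ≫ q = p

theorem IsSemiaffine.comp_isProper {S : Scheme.{u}} {p : Y ⟶ S} (hp : IsSemiaffine p) (h : X ⟶ Y)
    [IsProper h] : IsSemiaffine (h ≫ p) := by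
  obtain ⟨A, q, f, hA, hq, hqc, hf, rfl⟩ := hp
  exact ⟨A, q, h ≫ f, hA, hq, hqc, inferInstance, Category.assoc ..⟩

theorem isSemiaffine_comp_iff [AlgebraicGeometry.IsIntegral X] [AlgebraicGeometry.IsIntegral Y]
    [IsNormalScheme Y] {R : CommRingCat.{u}} (h : X ⟶ Y) [IsProper h] [IsDominant h]
    (p : Y ⟶ Spec R) [LocallyOfFiniteType p] : IsSemiaffine (h ≫ p) ↔ IsSemiaffine p := by
  refine ⟨fun ⟨A, q, f, _, _, _, _, hf⟩ ↦ ?_, fun hp ↦ hp.comp_isProper h⟩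
  obtain ⟨B, j, i, hj, hij, hi⟩ := exists_finiteType_isIntegral_comp_appTop q f h p hf
    (isIntegral_appTop_of_universallyClosed f) (isIntegral_appTop_of_isNormalScheme h)
  let g : Y ⟶ Spec B := Y.toSpecΓ ≫ Spec.map i
  have hg : g ≫ Spec.map j = p := toSpecΓ_SpecMap_comp p i j hij
  have : LocallyOfFiniteType g := by
    have : LocallyOfFiniteType (g ≫ Spec.map j) := by rwa [hg]
    exact locallyOfFiniteType_of_comp g (Spec.map j)
  have hhg : h ≫ g = X.toSpecΓ ≫ Spec.map (i ≫ h.appTop) := by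
    rw [Scheme.toSpecΓ_naturality_assoc, Spec.map_comp]
  have : IsProper (h ≫ g) := by
    have := universallyClosed_toSpecΓ f
    have := isSeparated_toSpecΓ f
    have := IsIntegralHom.SpecMap_iff.2 hi
    have : UniversallyClosed (h ≫ g) := hhg ▸ inferInstance
    have : IsSeparated (h ≫ g) := hhg ▸ inferInstance
    exact { }
  have hj' : LocallyOfFiniteType (Spec.map j) :=
    (HasRingHomProperty.Spec_iff (P := @LocallyOfFiniteType)).2 hj
  exact ⟨_, Spec.map j, g, inferInstance, hj', inferInstance, isProper_of_surjective h g, hg⟩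

theorem finite_of_isIso {R S : CommRingCat.{u}} (φ : R ⟶ S) [IsIso φ] : φ.hom.Finite :=
  .of_surjective _ (ConcreteCategory.bijective_of_isIso φ).2

namespace IsNormalization

variable [AlgebraicGeometry.IsIntegral X] [AlgebraicGeometry.IsIntegral Y] {f : X ⟶ Y}

theorem isNormalScheme (hf : IsNormalization f) : IsNormalScheme X := ⟨hf.1⟩

theorem isIntegralHom (hf : IsNormalization f) : IsIntegralHom f :=
  IsIntegralHom.iff_universallyClosed_and_isAffineHom.2 ⟨hf.2.2.1, hf.2.1⟩

theorem isDominant (hf : IsNormalization f) : IsDominant f :=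
  isDominant_of_map_genericPoint hf.2.2.2.1

theorem isIso_functionFieldMap [IsDominant f] (hf : IsNormalization f) :
    IsIso (functionFieldMap f) := by
  have : IsIso (f.stalkMap (genericPoint X)) := hf.2.2.2.2
  have : IsIso (Y.presheaf.stalkSpecializes (specializes_of_eq (map_genericPoint f))) :=
    (Y.presheaf.stalkCongr (.of_eq (map_genericPoint f))).isIso_inv
  exact IsIso.comp_isIso

theorem isFinite {k : Type u} [Field k] (hf : IsNormalization f) (p : Y ⟶ Spec (.of k))
    [LocallyOfFiniteType p] : IsFinite f := by
  have := hf.isIntegralHom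
  have := hf.isDominant
  have := hf.isIso_functionFieldMap
  exact isFinite_of_finite_functionFieldMap p f (finite_of_isIso _)

end IsNormalization

theorem semiaffine_descends_along_proper_surjection_general {k : Type u} [Field k]
    {S S' T T' : Scheme.{u}} [AlgebraicGeometry.IsIntegral S] [AlgebraicGeometry.IsIntegral S']
    [AlgebraicGeometry.IsIntegral T] [AlgebraicGeometry.IsIntegral T'] (pS : S ⟶ Spec (.of k))
    [LocallyOfFiniteType pS] (π : S' ⟶ S) [IsProper π] [IsDominant π]
    {ν : T ⟶ S} {ν' : T' ⟶ S'} (hν : IsNormalization ν) (hν' : IsNormalization ν') :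
    IsSemiaffine (ν' ≫ π ≫ pS) ↔ IsSemiaffine (ν ≫ pS) := by
  have := hν.isNormalScheme
  have := hν'.isNormalScheme
  have := hν.isDominant
  have := hν'.isDominant
  have := hν.isIso_functionFieldMap
  have := hν.isFinite pS
  have := hν'.isFinite (π ≫ pS)
  obtain ⟨h, hh, _⟩ := exists_isDominant_lift_of_isIso_functionFieldMap ν (ν' ≫ π)
  have : IsProper (h ≫ ν) := hh ▸ inferInstance
  have : IsProper h := .of_comp h ν
  rw [← reassoc_of% hh]
  exact isSemiaffine_comp_iff h (ν ≫ pS)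

end Schemes

/-- Let `k` be a field, `S` and `S'` irreducible and reduced
(i.e. integral) schemes of finite type over `k`, and `π : S' → S` a proper surjective
`k`-morphism.  Then the normalization of `S'` admits a proper `k`-morphism to an
affine `k`-scheme of finite type if and only if the normalization of `S` does.
(In particular, taking `S`, `S'` already normal, a proper surjection between normal
integral finite-type `k`-schemes descends the property of being proper over an affine
algebraic `k`-scheme.) -/
theorem semiaffine_descends_along_proper_surjection
    (k : Type) [Field k]
    (S S' : Scheme)
    [AlgebraicGeometry.IsIntegral S] [AlgebraicGeometry.IsIntegral S']
    (pS : S ⟶ Spec (CommRingCat.of k)) (pS' : S' ⟶ Spec (CommRingCat.of k))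
    [LocallyOfFiniteType pS] [QuasiCompact pS]
    [LocallyOfFiniteType pS'] [QuasiCompact pS']
    (π : S' ⟶ S) [IsProper π] [AlgebraicGeometry.Surjective π]
    (hπ : π ≫ pS = pS')
    (T T' : Scheme)
    [AlgebraicGeometry.IsIntegral T] [AlgebraicGeometry.IsIntegral T']
    (ν : T ⟶ S) (ν' : T' ⟶ S')
    (hν : IsNormalization ν) (hν' : IsNormalization ν') :
    (∃ (A : Scheme) (q : A ⟶ Spec (CommRingCat.of k)) (f : T' ⟶ A),
        IsAffine A ∧ LocallyOfFiniteType q ∧ QuasiCompact q ∧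
        IsProper f ∧ f ≫ q = ν' ≫ pS') ↔
    (∃ (A : Scheme) (q : A ⟶ Spec (CommRingCat.of k)) (f : T ⟶ A),
        IsAffine A ∧ LocallyOfFiniteType q ∧ QuasiCompact q ∧
        IsProper f ∧ f ≫ q = ν ≫ pS) := by
  subst hπ
  exact semiaffine_descends_along_proper_surjection_general pS π hν hν'

end
end
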